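/- arXiv:2212.05835 — 6 statements merged into one kernel-verified Lean document; each statement's English description precedes it below -/
import Mathlib

section
/- Let n ≥ 1, γ ∈ (0,1], M ≥ 0, and u₀, f₁, f₋₁ ∈ ℂⁿ. Let u : (−∞,0]×I → ℂⁿ be continuous, and define u^disk on the punctured closed unit disk by u(s,t) = u^disk(e^{2π(s+it)}). Assume that |u^disk(z) − u₀ − f₁·z − f₋₁·conj(z)| ≤ M·|z|^{1+γ} for all 0 < |z| ≤ 1 (scalar multiplication of vectors in ℂⁿ by complex numbers taken componentwise). Then for every s ≤ 0 one has |e^{−2πs}·c₁(s) − f₁| ≤ M·e^{2πγs}, where c₁(s) := ∫₀¹ u(s,t)e^{−2πit} dt is the first Fourier coefficient of u at s. (Paper's Lemma 2.1: the first Fourier coefficient recovers the complex-linear derivative of the disk map at the puncture.) -/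
open MeasureTheory Real

noncomputable section

theorem aux_int (k : ℤ) (hk : k ≠ 0) :
    (∫ t in (0:ℝ)..1, Complex.exp ((k * (2 * π * Complex.I)) * (t:ℂ))) = 0 := by
  have hc : ((k:ℂ) * (2 * π * Complex.I)) ≠ 0 :=
    mul_ne_zero (by exact_mod_cast hk) Complex.two_pi_I_ne_zero
  rw [integral_exp_mul_complex hc]
  simp [Complex.exp_int_mul_two_pi_mul_I]

theorem stmt_0 (n : ℕ) (hn : 1 ≤ n) (γ M : ℝ) (hγ0 : 0 < γ) (hγ1 : γ ≤ 1) (hM : 0 ≤ M)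
    (u₀ f₁ fm₁ : EuclideanSpace ℂ (Fin n))
    (udisk : ℂ → EuclideanSpace ℂ (Fin n))
    (hcont : ContinuousOn udisk {z : ℂ | 0 < ‖z‖ ∧ ‖z‖ ≤ 1})
    (hTaylor : ∀ z : ℂ, 0 < ‖z‖ → ‖z‖ ≤ 1 →
      ‖udisk z - u₀ - z • f₁ - (starRingEnd ℂ z) • fm₁‖ ≤ M * ‖z‖ ^ (1 + γ))
    (s : ℝ) (hs : s ≤ 0) :
    ‖Real.exp (-(2 * π * s)) •
        (∫ t in (0:ℝ)..1,
          Complex.exp (-(((2 * π * t : ℝ) : ℂ) * Complex.I)) •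
            udisk (Complex.exp (((2 * π * s : ℝ) : ℂ) + ((2 * π * t : ℝ) : ℂ) * Complex.I)))
      - f₁‖ ≤ M * Real.exp (2 * π * γ * s) := by
  set e : ℝ → ℂ := fun t => Complex.exp (-(((2 * π * t : ℝ) : ℂ) * Complex.I)) with he
  set z : ℝ → ℂ := fun t =>
    Complex.exp (((2 * π * s : ℝ) : ℂ) + ((2 * π * t : ℝ) : ℂ) * Complex.I) with hz
  set r : ℝ := Real.exp (2 * π * s) with hr
  have hrpos : 0 < r := Real.exp_pos _
  have hr1 : r ≤ 1 := by
    rw [hr, Real.exp_le_one_iff]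
    have := Real.pi_pos
    nlinarith
  have hzn : ∀ t, ‖z t‖ = r := by
    intro t
    simp [hz, hr, Complex.norm_exp]
  have hen : ∀ t, ‖e t‖ = 1 := by
    intro t
    simp [he, Complex.norm_exp]
  have hec : Continuous e := by simp only [he]; fun_prop
  have hzc : Continuous z := by simp only [hz]; fun_prop
  have huc : Continuous (fun t => udisk (z t)) :=
    hcont.comp_continuous hzc (fun t => by
      show 0 < ‖z t‖ ∧ ‖z t‖ ≤ 1
      rw [hzn]; exact ⟨hrpos, hr1⟩)
  have hez : ∀ t, e t * z t = (r : ℂ) := by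
    intro t
    simp only [he, hz, hr]
    rw [← Complex.exp_add, Complex.ofReal_exp]
    congr 1
    ring
  have hezc : ∀ t, e t * (starRingEnd ℂ (z t)) =
      (r : ℂ) * Complex.exp ((((-2:ℤ):ℂ) * (2 * π * Complex.I)) * (t:ℂ)) := by
    intro t
    simp only [he, hz, hr]
    rw [← Complex.exp_conj, ← Complex.exp_add, Complex.ofReal_exp, ← Complex.exp_add]
    congr 1
    simp only [map_add, map_mul, Complex.conj_ofReal, Complex.conj_I]
    push_cast
    ring
  have hI1 : (∫ t in (0:ℝ)..1, e t) = 0 := by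
    rw [← aux_int (-1) (by norm_num)]
    congr 1
    funext t
    simp only [he]
    congr 1
    push_cast
    ring
  have hI2 : (∫ t in (0:ℝ)..1, e t * (starRingEnd ℂ (z t))) = 0 := by
    simp_rw [hezc]
    rw [intervalIntegral.integral_const_mul, aux_int (-2) (by norm_num), mul_zero]
  set R : ℝ → EuclideanSpace ℂ (Fin n) := fun t =>
    udisk (z t) - u₀ - z t • f₁ - (starRingEnd ℂ (z t)) • fm₁ with hR
  have hzcc : Continuous (fun t => starRingEnd ℂ (z t)) := Complex.continuous_conj.comp hzc
  have hRc : Continuous R :=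
    ((huc.sub continuous_const).sub (hzc.smul continuous_const)).sub (hzcc.smul continuous_const)
  have hdec : ∀ t, e t • udisk (z t) = e t • R t + e t • u₀ + (r:ℂ) • f₁
      + (e t * (starRingEnd ℂ (z t))) • fm₁ := by
    intro t
    rw [← hez t]
    simp only [hR, smul_sub, mul_smul]
    abel
  have hint : (∫ t in (0:ℝ)..1, e t • udisk (z t)) =
      (∫ t in (0:ℝ)..1, e t • R t) + (r:ℂ) • f₁ := by
    simp_rw [hdec]
    have c1 : Continuous (fun t => e t • R t) := by fun_prop
    have c2 : Continuous (fun t => e t • u₀) := by fun_prop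
    have c3 : Continuous (fun _ : ℝ => (r:ℂ) • f₁) := by fun_prop
    have c4 : Continuous (fun t => (e t * (starRingEnd ℂ (z t))) • fm₁) := by fun_prop
    have c12 : Continuous (fun t => e t • R t + e t • u₀) := c1.add c2
    have c123 : Continuous (fun t => e t • R t + e t • u₀ + (r:ℂ) • f₁) := c12.add c3
    rw [intervalIntegral.integral_add (c123.intervalIntegrable _ _)
        (c4.intervalIntegrable _ _),
      intervalIntegral.integral_add (c12.intervalIntegrable _ _)
        (c3.intervalIntegrable _ _),
      intervalIntegral.integral_add (c1.intervalIntegrable _ _) (c2.intervalIntegrable _ _),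
      intervalIntegral.integral_smul_const, intervalIntegral.integral_smul_const,
      intervalIntegral.integral_smul_const, hI1, hI2]
    simp
  have hbound : ‖∫ t in (0:ℝ)..1, e t • R t‖ ≤ M * r ^ (1 + γ) := by
    have := intervalIntegral.norm_integral_le_of_norm_le_const (a := (0:ℝ)) (b := 1)
      (f := fun t => e t • R t) (C := M * r ^ (1 + γ)) (fun t _ => by
        rw [norm_smul, hen, one_mul]
        have := hTaylor (z t) (by rw [hzn]; exact hrpos) (by rw [hzn]; exact hr1)
        rwa [hzn] at this)
    simpa using this
  have hrinv : Real.exp (-(2 * π * s)) = r⁻¹ := by rw [hr, Real.exp_neg]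
  have hfin : Real.exp (-(2 * π * s)) • (∫ t in (0:ℝ)..1, e t • udisk (z t)) - f₁ =
      r⁻¹ • (∫ t in (0:ℝ)..1, e t • R t) := by
    rw [hint, hrinv, smul_add, Complex.coe_smul, smul_smul, inv_mul_cancel₀ hrpos.ne', one_smul,
      add_sub_cancel_right]
  have hpow : r⁻¹ * r ^ (1 + γ) = Real.exp (2 * π * γ * s) := by
    rw [Real.rpow_add hrpos, Real.rpow_one, inv_mul_cancel_left₀ hrpos.ne', hr, ← Real.exp_mul]
    congr 1
    ring
  rw [hfin, norm_smul, Real.norm_of_nonneg (inv_nonneg.mpr hrpos.le), ← hpow]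
  calc r⁻¹ * ‖∫ t in (0:ℝ)..1, e t • R t‖ ≤ r⁻¹ * (M * r ^ (1 + γ)) :=
        mul_le_mul_of_nonneg_left hbound (inv_nonneg.mpr hrpos.le)
    _ = M * (r⁻¹ * r ^ (1 + γ)) := by ring
end
end

section
/- For every C¹ map v : [0,1]×I → ℂⁿ one has |h₁(0) − e^{−2π}h₁(1)| ≤ 2‖∂̄v|_{[0,1]×I}‖₀, where h₁(s) := ∫₀¹ v(s,t)e^{−2πit} dt. Consequently, if v_α : [−ρ_α,ρ_α]×I → ℂⁿ is a sequence of C¹ maps (ρ_α ≥ 1) with e^{2πρ_α}‖∂̄v_α|_{[−1,1]×I}‖₀ → 0, then e^{2πρ_α}|h_{α,1}(0) − e^{−2π}h_{α,1}(1)| → 0, i.e., h_{α,1}(0) = e^{−2π}h_{α,1}(1) + o(e^{−2πρ_α}). (Paper's Lemma 4.2, cut-off decay controls the first Fourier coefficient across the middle of the neck.) -/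
open MeasureTheory Real Set Filter

noncomputable section

abbrev Cn (n : ℕ) := EuclideanSpace ℂ (Fin n)

/-- Partial derivative in the `s`-direction. -/
def pdS {E : Type*} [NormedAddCommGroup E] [NormedSpace ℝ E] (f : ℝ × ℝ → E) (p : ℝ × ℝ) : E :=
  fderiv ℝ f p (1, 0)

/-- Partial derivative in the `t`-direction. -/
def pdT {E : Type*} [NormedAddCommGroup E] [NormedSpace ℝ E] (f : ℝ × ℝ → E) (p : ℝ × ℝ) : E :=
  fderiv ℝ f p (0, 1)

/-- The standard ∂̄-operator: ∂̄f = (1/2)(∂_s f + i ∂_t f). -/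
def dbar {E : Type*} [NormedAddCommGroup E] [NormedSpace ℂ E] (f : ℝ × ℝ → E) (p : ℝ × ℝ) : E :=
  (2⁻¹ : ℝ) • (pdS f p + Complex.I • pdT f p)

/-- `cexp s t = e^{2π(s+it)}`. -/
def cexp (s t : ℝ) : ℂ :=
  Complex.exp (((2 * π * s : ℝ) : ℂ) + ((2 * π * t : ℝ) : ℂ) * Complex.I)

/-- The `m`-th Fourier coefficient of `f` at `s`. -/
def fCoef {n : ℕ} (f : ℝ × ℝ → Cn n) (m : ℤ) (s : ℝ) : Cn n :=
  ∫ t in (0:ℝ)..1, Complex.exp (-(((2 * π * (m:ℝ) * t : ℝ) : ℂ) * Complex.I)) • f (s, t)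

/-- Unweighted Sobolev `k`-norm of `f` over `U`. -/
def sobNorm {E : Type*} [NormedAddCommGroup E] [NormedSpace ℝ E] (k : ℕ)
    (f : ℝ × ℝ → E) (U : Set (ℝ × ℝ)) : ℝ :=
  Real.sqrt (∫ p in U, ∑ j ∈ Finset.range (k + 1), ‖iteratedFDeriv ℝ j f p‖ ^ 2)

/-- Weighted Sobolev `(k,δ)`-norm of `f` over `U` with weight `e^{2δ|s|}`. -/
def sobNormW {E : Type*} [NormedAddCommGroup E] [NormedSpace ℝ E] (k : ℕ) (δ : ℝ)
    (f : ℝ × ℝ → E) (U : Set (ℝ × ℝ)) : ℝ :=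
  Real.sqrt (∫ p in U,
    (∑ j ∈ Finset.range (k + 1), ‖iteratedFDeriv ℝ j f p‖ ^ 2) * Real.exp (2 * δ * |p.1|))

/-- Hat-norm: weighted Sobolev `(k,δ)`-norm with weight `e^{2δ(r−|s|)}` (big in the middle). -/
def hatNorm {E : Type*} [NormedAddCommGroup E] [NormedSpace ℝ E] (k : ℕ) (δ r : ℝ)
    (f : ℝ × ℝ → E) (U : Set (ℝ × ℝ)) : ℝ :=
  Real.sqrt (∫ p in U,
    (∑ j ∈ Finset.range (k + 1), ‖iteratedFDeriv ℝ j f p‖ ^ 2) * Real.exp (2 * δ * (r - |p.1|)))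

theorem aux_cs (f : ℝ × ℝ → ℝ) (hf : Continuous f) :
    ∫ p in Icc (0:ℝ) 1 ×ˢ Icc (0:ℝ) 1, f p ≤
      Real.sqrt (∫ p in Icc (0:ℝ) 1 ×ˢ Icc (0:ℝ) 1, f p ^ 2) := by
  have hK : IsCompact (Icc (0:ℝ) 1 ×ˢ Icc (0:ℝ) 1) := isCompact_Icc.prod isCompact_Icc
  have i1 := hf.continuousOn.integrableOn_compact (μ := volume) hK
  have i2 : IntegrableOn (fun p => f p ^ 2) (Icc (0:ℝ) 1 ×ˢ Icc (0:ℝ) 1) volume :=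
    (hf.pow 2).continuousOn.integrableOn_compact (μ := volume) hK
  have hvol : (volume : Measure (ℝ × ℝ)).real (Icc (0:ℝ) 1 ×ˢ Icc (0:ℝ) 1) = 1 := by
    rw [Measure.volume_eq_prod, Measure.real, Measure.prod_prod]; simp
  set c := ∫ p in Icc (0:ℝ) 1 ×ˢ Icc (0:ℝ) 1, f p with hc
  have h0 : 0 ≤ ∫ p in Icc (0:ℝ) 1 ×ˢ Icc (0:ℝ) 1, (f p - c) ^ 2 :=
    integral_nonneg fun p => sq_nonneg _
  have h1 : ∫ p in Icc (0:ℝ) 1 ×ˢ Icc (0:ℝ) 1, (f p - c) ^ 2 =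
      (∫ p in Icc (0:ℝ) 1 ×ˢ Icc (0:ℝ) 1, f p ^ 2) - c ^ 2 := by
    have i3 : IntegrableOn (fun _ : ℝ × ℝ => c ^ 2) (Icc (0:ℝ) 1 ×ˢ Icc (0:ℝ) 1) volume :=
      continuous_const.continuousOn.integrableOn_compact hK
    have e : ∀ p, (f p - c) ^ 2 = (f p ^ 2 - (2 * c) * f p) + c ^ 2 := fun p => by ring
    simp_rw [e]
    have i4 : IntegrableOn (fun p => (2 * c) * f p) (Icc (0:ℝ) 1 ×ˢ Icc (0:ℝ) 1) volume :=
      i1.const_mul _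
    have i5 : IntegrableOn (fun p => f p ^ 2 - (2 * c) * f p)
      (Icc (0:ℝ) 1 ×ˢ Icc (0:ℝ) 1) volume := i2.sub i4
    rw [integral_add i5 i3, integral_sub i2 i4,
      integral_const_mul, ← hc, setIntegral_const, hvol]
    simp; ring
  apply Real.le_sqrt_of_sq_le
  linarith

theorem aux_cont {n : ℕ} (v : ℝ × ℝ → Cn n) (hv : ContDiff ℝ 1 v) : Continuous (dbar v) := by
  have h := hv.continuous_fderiv one_ne_zero
  unfold dbar pdS pdT
  fun_prop

def eL : ℝ × ℝ →L[ℝ] ℂ :=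
  (-(2 * π : ℂ)) • (Complex.ofRealCLM.comp (ContinuousLinearMap.fst ℝ ℝ ℝ) +
    Complex.I • Complex.ofRealCLM.comp (ContinuousLinearMap.snd ℝ ℝ ℝ))

theorem eL_apply (p : ℝ × ℝ) : eL p = -(2 * π : ℂ) * (p.1 + Complex.I * p.2) := by
  simp [eL]
  ring

theorem aux_main {n : ℕ} (v : ℝ × ℝ → Cn n) (hv : ContDiff ℝ 1 v)
    (hper : ∀ s t : ℝ, v (s, t + 1) = v (s, t)) :
    Real.exp (-(2 * π)) • fCoef v 1 1 - fCoef v 1 0 =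
      ∫ p in Icc (0:ℝ) 1 ×ˢ Icc (0:ℝ) 1, (2 * Complex.exp (eL p)) • dbar v p := by
  have hd : ∀ p, HasFDerivAt v (fderiv ℝ v p) p := fun p =>
    (hv.differentiable one_ne_zero p).hasFDerivAt
  have hE : ∀ p, HasFDerivAt (fun p => Complex.exp (eL p)) (Complex.exp (eL p) • eL) p :=
    fun p => eL.hasFDerivAt.cexp
  have hw := fun p => (hE p).smul (hd p)
  have hg := fun p => (hw p).const_smul Complex.I
  have hcw : Continuous (fun p => Complex.exp (eL p) • v p) :=
    (Complex.continuous_exp.comp eL.continuous).smul hv.continuous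
  have key : ∀ p, (Complex.exp (eL p) • fderiv ℝ v p + (Complex.exp (eL p) • eL).smulRight (v p)) (1, 0)
      + (Complex.I • (Complex.exp (eL p) • fderiv ℝ v p + (Complex.exp (eL p) • eL).smulRight (v p))) (0, 1)
      = (2 * Complex.exp (eL p)) • dbar v p := by
    intro p
    have h1 : eL (1, 0) = -(2 * π : ℂ) := by simp [eL_apply]
    have h2 : eL (0, 1) = -(2 * π : ℂ) * Complex.I := by simp [eL_apply]
    simp only [dbar, pdS, pdT, ContinuousLinearMap.add_apply, ContinuousLinearMap.smul_apply,
      ContinuousLinearMap.smulRight_apply, h1, h2, smul_eq_mul]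
    ext i
    simp only [PiLp.add_apply, PiLp.smul_apply, smul_eq_mul, Complex.real_smul]
    push_cast
    linear_combination (-(2 * π : ℂ) * Complex.exp (eL p) * v p i) * Complex.I_sq
  have hcd := aux_cont v hv
  have hD := integral_divergence_prod_Icc_of_hasFDerivAt_off_countable_of_le
    (fun p => Complex.exp (eL p) • v p) (fun p => Complex.I • Complex.exp (eL p) • v p)
    _ _ ((0:ℝ),(0:ℝ)) ((1:ℝ),(1:ℝ)) ⟨zero_le_one, zero_le_one⟩ ∅ countable_empty
    hcw.continuousOn (show Continuous fun p => Complex.I • Complex.exp (eL p) • v p from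
      hcw.const_smul Complex.I).continuousOn
    (fun p _ => hw p) (fun p _ => hg p) (by
      simp_rw [key]
      apply Continuous.integrableOn_Icc
      fun_prop)
  simp_rw [key] at hD
  rw [Icc_prod_Icc, hD]
  have hp : ∀ x : ℝ, Complex.exp (eL (x, 1)) • v (x, 1) = Complex.exp (eL (x, 0)) • v (x, 0) := by
    intro x
    have := hper x 0
    rw [zero_add] at this
    rw [this]
    congr 1
    rw [Complex.exp_eq_exp_iff_exists_int]
    refine ⟨-1, ?_⟩
    simp [eL_apply]; ring
  simp_rw [hp]
  simp only [fCoef, sub_self, zero_add]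
  rw [← intervalIntegral.integral_smul]
  congr 1
  · refine intervalIntegral.integral_congr fun t _ => ?_
    beta_reduce
    rw [← Complex.coe_smul, smul_smul, Complex.ofReal_exp, ← Complex.exp_add]
    congr 2
    simp [eL_apply]; ring
  · refine intervalIntegral.integral_congr fun t _ => ?_
    beta_reduce
    congr 2
    simp [eL_apply]; ring

theorem aux_bound {n : ℕ} (v : ℝ × ℝ → Cn n) (hv : ContDiff ℝ 1 v)
    (hper : ∀ s t : ℝ, v (s, t + 1) = v (s, t)) :
    ‖fCoef v 1 0 - Real.exp (-(2 * π)) • fCoef v 1 1‖ ≤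
        2 * Real.sqrt (∫ p in Icc (0:ℝ) 1 ×ˢ Icc (0:ℝ) 1, ‖dbar v p‖ ^ 2) := by
  have hcd := aux_cont v hv
  have hK : IsCompact (Icc (0:ℝ) 1 ×ˢ Icc (0:ℝ) 1) := isCompact_Icc.prod isCompact_Icc
  rw [norm_sub_rev, aux_main v hv hper]
  calc _ ≤ ∫ p in Icc (0:ℝ) 1 ×ˢ Icc (0:ℝ) 1, ‖(2 * Complex.exp (eL p)) • dbar v p‖ :=
        norm_integral_le_integral_norm _
    _ ≤ ∫ p in Icc (0:ℝ) 1 ×ˢ Icc (0:ℝ) 1, 2 * ‖dbar v p‖ := by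
        apply setIntegral_mono_on
        · exact Continuous.continuousOn (by fun_prop) |>.integrableOn_compact hK
        · exact Continuous.continuousOn (by fun_prop) |>.integrableOn_compact hK
        · exact hK.measurableSet
        · intro p hp
          have : ‖Complex.exp (eL p)‖ ≤ 1 := by
            rw [Complex.norm_exp, eL_apply]
            apply Real.exp_le_one_iff.2
            have := hp.1.1
            have := Real.pi_pos
            simp
            positivity
          rw [norm_smul, norm_mul, Complex.norm_ofNat]
          have h0 := norm_nonneg (dbar v p)
          gcongr
          linarith
    _ = 2 * ∫ p in Icc (0:ℝ) 1 ×ˢ Icc (0:ℝ) 1, ‖dbar v p‖ := integral_const_mul _ _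
    _ ≤ _ := by
        gcongr
        exact aux_cs _ hcd.norm

theorem stmt_4 (n : ℕ) (hn : 1 ≤ n) :
    -- cut-off decay controls the first Fourier coefficient across the middle of the neck
    (∀ v : ℝ × ℝ → Cn n, ContDiff ℝ 1 v → (∀ s t : ℝ, v (s, t + 1) = v (s, t)) →
      ‖fCoef v 1 0 - Real.exp (-(2 * π)) • fCoef v 1 1‖ ≤
        2 * Real.sqrt (∫ p in Icc (0:ℝ) 1 ×ˢ Icc (0:ℝ) 1, ‖dbar v p‖ ^ 2)) ∧
    (∀ (ρ : ℕ → ℝ) (vα : ℕ → ℝ × ℝ → Cn n),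
      (∀ α, 1 ≤ ρ α) → (∀ α, ContDiff ℝ 1 (vα α)) →
      (∀ α, ∀ s t : ℝ, vα α (s, t + 1) = vα α (s, t)) →
      Tendsto (fun α => Real.exp (2 * π * ρ α) *
          Real.sqrt (∫ p in Icc (-1:ℝ) 1 ×ˢ Icc (0:ℝ) 1, ‖dbar (vα α) p‖ ^ 2))
        atTop (nhds 0) →
      Tendsto (fun α => Real.exp (2 * π * ρ α) *
          ‖fCoef (vα α) 1 0 - Real.exp (-(2 * π)) • fCoef (vα α) 1 1‖)
        atTop (nhds 0)) := by
  refine ⟨fun v hv hper => aux_bound v hv hper, fun ρ vα _ hv hper ht => ?_⟩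
  have ht2 := ht.const_mul 2
  rw [mul_zero] at ht2
  refine squeeze_zero (fun α => by positivity) (fun α => ?_) ht2
  rw [mul_left_comm]
  refine mul_le_mul_of_nonneg_left ((aux_bound _ (hv α) (hper α)).trans ?_) (Real.exp_pos _).le
  have hK : IsCompact (Icc (-1:ℝ) 1 ×ˢ Icc (0:ℝ) 1) := isCompact_Icc.prod isCompact_Icc
  gcongr 2 * Real.sqrt ?_
  apply setIntegral_mono_set
  · exact ((aux_cont _ (hv α)).norm.pow 2).continuousOn.integrableOn_compact hK
  · exact Eventually.of_forall fun p => by positivity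
  · exact (Set.prod_mono (Icc_subset_Icc (by norm_num) le_rfl) subset_rfl).eventuallyLE
end
end

section
/- Let δ > 0, ρ > 1, and let v : [1,ρ]×I → ℂⁿ be a C¹ map. Let h₁(s) := ∫₀¹ v(s,t)e^{−2πit} dt and b₁(s) := (1/2)(h₁′(s) − 2π h₁(s)) (so b₁(s) is the first Fourier coefficient of ∂̄v at s). Then for every s ∈ [1,ρ]: |h₁(s) − e^{2π(s−1)}h₁(1)| ≤ √(2/δ) · e^{−(2π+δ)(ρ−s)} · ( ∫₁^{ρ} |b₁(σ)|² e^{2(2π+δ)(ρ−σ)} dσ )^{1/2}. (Quantitative form of the paper's Lemma 4.3: if the weighted norm of the Fourier mode b₁ of ∂̄v is controlled, then h₁ grows like a holomorphic mode up to an exponentially small error.) -/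
open MeasureTheory Real Set Filter

noncomputable section

theorem aux_cs_s5 {a b : ℝ} (hab : a ≤ b) (f g : ℝ → ℝ) (hf : Continuous f) (hg : Continuous g) :
    (∫ x in a..b, f x * g x) ^ 2 ≤ (∫ x in a..b, f x ^ 2) * (∫ x in a..b, g x ^ 2) := by
  have key : ∀ x : ℝ, 0 ≤ (∫ y in a..b, f y ^ 2) * (x * x) + (2 * ∫ y in a..b, f y * g y) * x
      + ∫ y in a..b, g y ^ 2 := by
    intro x
    have h0 : 0 ≤ ∫ y in a..b, (f y * x + g y) ^ 2 :=
      intervalIntegral.integral_nonneg hab (fun y _ => sq_nonneg _)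
    have h1 : ∫ y in a..b, (f y * x + g y) ^ 2 =
        ∫ y in a..b, ((x * x) * f y ^ 2 + (2 * x) * (f y * g y) + g y ^ 2) := by
      congr 1; ext y; ring
    have i1 : IntervalIntegrable (fun y => (x * x) * f y ^ 2) volume a b :=
      Continuous.intervalIntegrable (by fun_prop) _ _
    have i2 : IntervalIntegrable (fun y => (2 * x) * (f y * g y)) volume a b :=
      Continuous.intervalIntegrable (by fun_prop) _ _
    have i3 : IntervalIntegrable (fun y => g y ^ 2) volume a b :=
      Continuous.intervalIntegrable (by fun_prop) _ _
    rw [h1, intervalIntegral.integral_add (i1.add i2) i3, intervalIntegral.integral_add i1 i2,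
      intervalIntegral.integral_const_mul, intervalIntegral.integral_const_mul] at h0
    linarith
  have := discrim_le_zero key
  unfold discrim at this
  nlinarith

theorem aux_deriv {n : ℕ} (v : ℝ × ℝ → Cn n) (hv : ContDiff ℝ 1 v) :
    ∃ h' : ℝ → Cn n, Continuous h' ∧ ∀ s, HasDerivAt (fun r => fCoef v 1 r) (h' s) s := by
  have hc : Continuous (fderiv ℝ v) := hv.continuous_fderiv (by norm_num)
  have hvc : Continuous v := hv.continuous
  let e : ℝ → ℂ := fun t => Complex.exp (-(((2 * π * ((1:ℤ):ℝ) * t : ℝ) : ℂ) * Complex.I))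
  have he : Continuous e := by fun_prop
  let F' : ℝ → ℝ → Cn n := fun s t => e t • fderiv ℝ v (s, t) (1, 0)
  have hF' : Continuous F'.uncurry := by
    have : Continuous (fun p : ℝ × ℝ => e p.2 • fderiv ℝ v (p.1, p.2) (1, 0)) := by fun_prop
    exact this
  refine ⟨fun s => ∫ t in (0:ℝ)..1, F' s t,
    intervalIntegral.continuous_parametric_intervalIntegral_of_continuous' hF' _ _, fun s => ?_⟩
  obtain ⟨C, hC⟩ := (((isCompact_Icc (a := s - 1) (b := s + 1)).prod
    (isCompact_Icc (a := (0:ℝ)) (b := 1))).exists_bound_of_continuousOn hF'.continuousOn)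
  have hF's : ∀ x, Continuous (F' x) := fun x => hF'.comp (by fun_prop : Continuous fun t => (x, t))
  have hFc : ∀ x, Continuous (fun t => e t • v (x, t)) := fun x => by fun_prop
  refine (intervalIntegral.hasDerivAt_integral_of_dominated_loc_of_deriv_le
    (F := fun s t => e t • v (s, t)) (F' := F') (bound := fun _ => C)
    (s := Icc (s - 1) (s + 1)) (Icc_mem_nhds (by linarith) (by linarith))
    (Eventually.of_forall fun x => (hFc x).aestronglyMeasurable)
    ((hFc s).intervalIntegrable _ _) (hF's s).aestronglyMeasurable ?_
    (continuous_const.intervalIntegrable _ _) ?_).2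
  · refine Eventually.of_forall fun t ht x hx => ?_
    rw [uIoc_of_le zero_le_one] at ht
    exact hC (x, t) ⟨hx, ht.1.le, ht.2⟩
  · refine Eventually.of_forall fun t ht x hx => ?_
    have h1 : HasFDerivAt v (fderiv ℝ v (x, t)) (x, t) :=
      ((hv.differentiable (by norm_num)) (x, t)).hasFDerivAt
    have h2 : HasDerivAt (fun x : ℝ => (x, t)) ((1:ℝ), (0:ℝ)) x :=
      (hasDerivAt_id x).prodMk (hasDerivAt_const x t)
    exact (h1.comp_hasDerivAt x h2).const_smul (e t)

theorem aux_main_s5 {E : Type*} [NormedAddCommGroup E] [NormedSpace ℝ E] [CompleteSpace E]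
    (δ ρ : ℝ) (hδ : 0 < δ) (h h' : ℝ → E) (hc' : Continuous h')
    (hd : ∀ s, HasDerivAt h (h' s) s) (s : ℝ) (hs1 : 1 ≤ s) (hsρ : s ≤ ρ) :
    ‖h s - Real.exp (2 * π * (s - 1)) • h 1‖ ≤
      Real.sqrt (2 / δ) * Real.exp (-(2 * π + δ) * (ρ - s)) *
        Real.sqrt (∫ σ in (1:ℝ)..ρ,
          ‖(2⁻¹ : ℝ) • (h' σ - (2 * π) • h σ)‖ ^ 2 *
            Real.exp (2 * (2 * π + δ) * (ρ - σ))) := by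
  have hhc : Continuous h := continuous_iff_continuousAt.2 fun x => (hd x).continuousAt
  set b : ℝ → E := fun σ => (2⁻¹ : ℝ) • (h' σ - (2 * π) • h σ) with hb
  have hbc : Continuous b := by fun_prop
  have hg : ∀ x, HasDerivAt (fun x => Real.exp (2 * π * (s - x)) • h x)
      ((2 * Real.exp (2 * π * (s - x))) • b x) x := by
    intro x
    have h1 : HasDerivAt (fun x => Real.exp (2 * π * (s - x)))
        (Real.exp (2 * π * (s - x)) * (2 * π * (-1))) x :=
      (((hasDerivAt_id x).const_sub s).const_mul (2 * π)).exp
    have e : (2 * Real.exp (2 * π * (s - x))) • b x = Real.exp (2 * π * (s - x)) • h' x +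
        (Real.exp (2 * π * (s - x)) * (2 * π * (-1))) • h x := by
      simp only [b]
      module
    rw [e]
    exact h1.smul (hd x)
  have hint := intervalIntegral.integral_eq_sub_of_hasDerivAt (a := 1) (b := s)
    (fun x _ => hg x) (Continuous.intervalIntegrable (by fun_prop) _ _)
  simp only [sub_self, mul_zero, Real.exp_zero, one_smul] at hint
  rw [← hint]
  let f : ℝ → ℝ := fun σ => ‖b σ‖ * Real.exp ((2 * π + δ) * (ρ - σ))
  let g : ℝ → ℝ := fun σ => 2 * Real.exp (2 * π * (s - ρ) - δ * (ρ - σ))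
  have hf : Continuous f := by fun_prop
  have hgc : Continuous g := by fun_prop
  have hle : ‖∫ σ in (1:ℝ)..s, (2 * Real.exp (2 * π * (s - σ))) • b σ‖ ≤
      ∫ σ in (1:ℝ)..s, f σ * g σ := by
    refine (intervalIntegral.norm_integral_le_integral_norm hs1).trans (le_of_eq ?_)
    congr 1; ext σ
    have : Real.exp (2 * π * (s - σ)) = Real.exp ((2 * π + δ) * (ρ - σ)) *
        Real.exp (2 * π * (s - ρ) - δ * (ρ - σ)) := by
      rw [← Real.exp_add]; congr 1; ring
    rw [norm_smul, Real.norm_of_nonneg (by positivity), this]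
    simp only [f, g]; ring
  refine hle.trans ?_
  have hF : ∫ σ in (1:ℝ)..s, f σ ^ 2 ≤ ∫ σ in (1:ℝ)..ρ,
      ‖b σ‖ ^ 2 * Real.exp (2 * (2 * π + δ) * (ρ - σ)) := by
    have : (fun σ => ‖b σ‖ ^ 2 * Real.exp (2 * (2 * π + δ) * (ρ - σ))) = fun σ => f σ ^ 2 := by
      ext σ
      simp only [f]
      rw [mul_pow, ← Real.exp_nat_mul]; congr 2; push_cast; ring
    rw [this]
    exact intervalIntegral.integral_mono_interval le_rfl hs1 hsρ
      (Eventually.of_forall fun x => sq_nonneg _)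
      ((hf.pow 2).intervalIntegrable _ _)
  have hG : ∫ σ in (1:ℝ)..s, g σ ^ 2 ≤ 2 / δ * Real.exp (-(2 * π + δ) * (ρ - s)) ^ 2 := by
    have hp : ∀ x, HasDerivAt
        (fun σ => 2 / δ * Real.exp (2 * (2 * π * (s - ρ) - δ * (ρ - σ)))) (g x ^ 2) x := by
      intro x
      have h1 : HasDerivAt (fun σ => 2 / δ * Real.exp (2 * (2 * π * (s - ρ) - δ * (ρ - σ))))
          (2 / δ * (Real.exp (2 * (2 * π * (s - ρ) - δ * (ρ - x))) * (2 * (-(δ * (-1)))))) x :=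
        ((((((hasDerivAt_id x).const_sub ρ).const_mul δ).const_sub _).const_mul 2).exp).const_mul _
      convert h1 using 1
      simp only [g]
      rw [mul_pow, ← Real.exp_nat_mul]
      push_cast
      field_simp
    rw [intervalIntegral.integral_eq_sub_of_hasDerivAt (fun x _ => hp x)
      ((hgc.pow 2).intervalIntegrable _ _), ← Real.exp_nat_mul]
    have e1 : 2 * (2 * π * (s - ρ) - δ * (ρ - s)) = ((2:ℕ):ℝ) * (-(2 * π + δ) * (ρ - s)) := by
      push_cast; ring
    rw [e1]
    have : 0 ≤ 2 / δ * Real.exp (2 * (2 * π * (s - ρ) - δ * (ρ - 1))) := by positivity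
    linarith
  have hcs := aux_cs_s5 hs1 f g hf hgc
  have hG0 : 0 ≤ ∫ σ in (1:ℝ)..s, g σ ^ 2 :=
    intervalIntegral.integral_nonneg hs1 (fun y _ => sq_nonneg _)
  have hF0 : 0 ≤ ∫ σ in (1:ℝ)..s, f σ ^ 2 :=
    intervalIntegral.integral_nonneg hs1 (fun y _ => sq_nonneg _)
  refine le_of_abs_le (abs_le_of_sq_le_sq ?_ (by positivity))
  rw [mul_pow, mul_pow, Real.sq_sqrt (by positivity), Real.sq_sqrt (hF0.trans hF)]
  calc _ ≤ _ := hcs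
    _ ≤ _ := mul_le_mul hF hG hG0 (hF0.trans hF)
    _ = _ := mul_comm _ _

theorem stmt_5 (n : ℕ) (hn : 1 ≤ n) (δ ρ : ℝ) (hδ : 0 < δ) (hρ : 1 < ρ)
    (v : ℝ × ℝ → Cn n) (hv : ContDiff ℝ 1 v) (hper : ∀ s t : ℝ, v (s, t + 1) = v (s, t))
    (s : ℝ) (hs1 : 1 ≤ s) (hsρ : s ≤ ρ) :
    ‖fCoef v 1 s - Real.exp (2 * π * (s - 1)) • fCoef v 1 1‖ ≤
      Real.sqrt (2 / δ) * Real.exp (-(2 * π + δ) * (ρ - s)) *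
        Real.sqrt (∫ σ in (1:ℝ)..ρ,
          ‖(2⁻¹ : ℝ) • (deriv (fun r => fCoef v 1 r) σ - (2 * π) • fCoef v 1 σ)‖ ^ 2 *
            Real.exp (2 * (2 * π + δ) * (ρ - σ))) := by
  obtain ⟨h', hc', hd⟩ := aux_deriv v hv
  have h1 : ∀ σ, deriv (fun r => fCoef v 1 r) σ = h' σ := fun σ => (hd σ).deriv
  simp only [h1]
  exact aux_main_s5 δ ρ hδ (fun r => fCoef v 1 r) h' hc' hd s hs1 hsρ
end
end

section
/- Let n ≥ 1 and M > 0. Let W : I → End(ℝ^{2n}) be integrable with ∫₀¹ |Id − W(t)| dt ≤ 1/2 and ∫₀¹ |W(t)|² dt ≤ M. Then M₀ := ∫₀¹ W(t) dt is invertible with |M₀^{−1}| ≤ 2, and for every integrable map g : I → ℝ^{2n} with ∫₀¹ |g(t)|² dt < ∞ and every c ∈ ℝ^{2n}, the vector ĝ := M₀^{−1}·∫₀¹ W(t)g(t) dt satisfies |ĝ − c| ≤ 2√M·( ∫₀¹ |g(t) − c|² dt )^{1/2}. (Quantitative form of the paper's Lemma 5.7: the frame-twisted average of a map is close to any constant that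 the map is L²-close to.) -/
open MeasureTheory Real Set

noncomputable section

theorem stmt_10 (n : ℕ) (hn : 1 ≤ n) (M : ℝ) (hM : 0 < M)
    (W : ℝ → (EuclideanSpace ℝ (Fin (2 * n)) →L[ℝ] EuclideanSpace ℝ (Fin (2 * n))))
    (hWint : IntegrableOn W (Icc (0:ℝ) 1))
    (hWsq : IntegrableOn (fun t => ‖W t‖ ^ 2) (Icc (0:ℝ) 1))
    (hW1 : (∫ t in (0:ℝ)..1, ‖1 - W t‖) ≤ 1 / 2)
    (hW2 : (∫ t in (0:ℝ)..1, ‖W t‖ ^ 2) ≤ M) :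
    IsUnit (∫ t in (0:ℝ)..1, W t) ∧
    ‖Ring.inverse (∫ t in (0:ℝ)..1, W t)‖ ≤ 2 ∧
    ∀ (g : ℝ → EuclideanSpace ℝ (Fin (2 * n))) (c : EuclideanSpace ℝ (Fin (2 * n))),
      IntegrableOn g (Icc (0:ℝ) 1) →
      IntegrableOn (fun t => ‖g t‖ ^ 2) (Icc (0:ℝ) 1) →
      ‖Ring.inverse (∫ t in (0:ℝ)..1, W t) (∫ t in (0:ℝ)..1, W t (g t)) - c‖ ≤
        2 * Real.sqrt M * Real.sqrt (∫ t in (0:ℝ)..1, ‖g t - c‖ ^ 2) := by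
  have h01 : (0:ℝ) ≤ 1 := zero_le_one
  have hWi : IntervalIntegrable W volume 0 1 :=
    (intervalIntegrable_iff_integrableOn_Icc_of_le h01).2 hWint
  have hA : ‖1 - ∫ t in (0:ℝ)..1, W t‖ ≤ 1 / 2 := by
    have h1 : (1 - ∫ t in (0:ℝ)..1, W t) = ∫ t in (0:ℝ)..1, (1 - W t) := by
      rw [intervalIntegral.integral_sub intervalIntegrable_const hWi]
      simp
    rw [h1]
    exact (intervalIntegral.norm_integral_le_integral_norm h01).trans hW1
  have hval : ∀ x, (∫ t in (0:ℝ)..1, W t) x = ∫ t in (0:ℝ)..1, W t x := fun x =>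
    ContinuousLinearMap.intervalIntegral_apply hWi x
  generalize hAdef : (∫ t in (0:ℝ)..1, W t) = A at *
  have hu : IsUnit A := by
    have := isUnit_one_sub_of_norm_lt_one (x := 1 - A) (by linarith)
    simpa using this
  have hinv : ‖Ring.inverse A‖ ≤ 2 := by
    refine ContinuousLinearMap.opNorm_le_bound _ (by norm_num) fun y => ?_
    have h1 : A (Ring.inverse A y) = y := by
      have := Ring.mul_inverse_cancel A hu
      exact congrArg (fun B => B y) this
    set x := Ring.inverse A y
    have h2 : x = y + (1 - A) x := by
      simp [h1]
    have h3 : ‖x‖ ≤ ‖y‖ + ‖(1 - A) x‖ := by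
      calc ‖x‖ = ‖y + (1 - A) x‖ := by rw [← h2]
        _ ≤ _ := norm_add_le _ _
    have h4 := (1 - A).le_of_opNorm_le hA x
    linarith
  refine ⟨hu, hinv, fun g c hg hg2 => ?_⟩
  have h1 : Ring.inverse A (A c) = c := by
    have := Ring.inverse_mul_cancel A hu
    exact congrArg (fun B => B c) this
  -- L2 facts
  have hs : Ioc (0:ℝ) 1 ⊆ Icc 0 1 := Ioc_subset_Icc_self
  have hW2m : MemLp W 2 (volume.restrict (Ioc (0:ℝ) 1)) :=
    (memLp_two_iff_integrable_sq_norm (hWint.mono_set hs).aestronglyMeasurable).2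
      (hWsq.mono_set hs)
  have hg2m : MemLp g 2 (volume.restrict (Ioc (0:ℝ) 1)) :=
    (memLp_two_iff_integrable_sq_norm (hg.mono_set hs).aestronglyMeasurable).2
      (hg2.mono_set hs)
  have hgc : MemLp (fun t => g t - c) 2 (volume.restrict (Ioc (0:ℝ) 1)) :=
    hg2m.sub (memLp_const c)
  have hprod : ∀ f : ℝ → EuclideanSpace ℝ (Fin (2 * n)),
      MemLp f 2 (volume.restrict (Ioc (0:ℝ) 1)) →
      Integrable (fun t => W t (f t)) (volume.restrict (Ioc (0:ℝ) 1)) := by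
    intro f hf
    have hm : Integrable (fun t => ‖W t‖ * ‖f t‖) (volume.restrict (Ioc (0:ℝ) 1)) :=
      hW2m.norm.integrable_mul hf.norm
    refine hm.mono' ?_ (Filter.Eventually.of_forall fun t => (W t).le_opNorm _)
    exact isBoundedBilinearMap_apply.continuous.comp_aestronglyMeasurable
      (hW2m.aestronglyMeasurable.prodMk hf.aestronglyMeasurable)
  have h2 : (∫ t in (0:ℝ)..1, W t (g t)) - A c = ∫ t in (0:ℝ)..1, W t (g t - c) := by
    rw [hval, ← intervalIntegral.integral_sub]
    · simp
    · exact (intervalIntegrable_iff_integrableOn_Ioc_of_le h01).2 (hprod g hg2m)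
    · exact (intervalIntegrable_iff_integrableOn_Ioc_of_le h01).2 (hprod _ (memLp_const c))
  have h3 : ‖∫ t in (0:ℝ)..1, W t (g t - c)‖ ≤
      Real.sqrt M * Real.sqrt (∫ t in (0:ℝ)..1, ‖g t - c‖ ^ 2) := by
    have hH := integral_mul_le_Lp_mul_Lq_of_nonneg (μ := volume.restrict (Ioc (0:ℝ) 1))
      (p := 2) (q := 2) Real.HolderConjugate.two_two
      (f := fun t => ‖W t‖) (g := fun t => ‖g t - c‖)
      (Filter.Eventually.of_forall fun t => norm_nonneg _)
      (Filter.Eventually.of_forall fun t => norm_nonneg _)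
      (by simpa using hW2m.norm) (by simpa using hgc.norm)
    simp only [Real.rpow_two, ← Real.sqrt_eq_rpow] at hH
    rw [intervalIntegral.integral_of_le h01] at hW2 ⊢
    rw [intervalIntegral.integral_of_le h01]
    calc _ ≤ ∫ t in Ioc (0:ℝ) 1, ‖W t (g t - c)‖ := norm_integral_le_integral_norm _
      _ ≤ ∫ t in Ioc (0:ℝ) 1, ‖W t‖ * ‖g t - c‖ :=
        integral_mono (hprod _ hgc).norm (hW2m.norm.integrable_mul hgc.norm)
          fun t => (W t).le_opNorm _
      _ ≤ _ := hH
      _ ≤ _ := by gcongr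
  calc _ = ‖Ring.inverse A ((∫ t in (0:ℝ)..1, W t (g t)) - A c)‖ := by rw [map_sub, h1]
    _ ≤ 2 * ‖(∫ t in (0:ℝ)..1, W t (g t)) - A c‖ := (Ring.inverse A).le_of_opNorm_le hinv _
    _ ≤ _ := by rw [h2, mul_assoc]; gcongr
end
end

section
/- Let k ≥ 0 be an integer and let δ > 0 with δ ∉ 2πℤ. Consider on maps f : ℝ×I → ℂ the weighted Sobolev quantity N_m(f) := (∫_{ℝ×I} Σ_{j=0}^{m} |d^{(j)}f(s,t)|² e^{2δs} ds dt)^{1/2}. Then there is a constant C = C(k,δ) such that: (existence with estimate) for every smooth f : ℝ×I → ℂ with N_k(f) < ∞ there exists a smooth u : ℝ×I → ℂ with ∂̄u = f and N_{k+1}(u) ≤ C·N_k(f); (uniqueness) if u₁, u₂ are C¹ maps with ∂̄u₁ = ∂̄u₂ = f and N_0(u₁), N_0(u₂) < ∞, then u₁ = u₂. (Paper's Corollary 6.2: invertibility of the Cauchy–Riemann operator on the infinite cylinder in weighted Sobolev spaces with weights −δ, δ at the two ends.) -/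
open MeasureTheory Real Set Filter

noncomputable section

/-- The weighted Sobolev quantity `N_m(f)` on the full cylinder with weight `e^{2δ s}`
(the weights `(−δ, δ)` at the two ends). -/
def wN (m : ℕ) (δ : ℝ) (f : ℝ × ℝ → ℂ) : ℝ :=
  Real.sqrt (∫ p in (univ : Set ℝ) ×ˢ Icc (0:ℝ) 1,
    (∑ j ∈ Finset.range (m + 1), ‖iteratedFDeriv ℝ j f p‖ ^ 2) * Real.exp (2 * δ * p.1))

lemma cs_weight {k φ : ℝ → ENNReal} (hk : Measurable k) (hφ : Measurable φ) :
    (∫⁻ x, k x * φ x) ^ 2 ≤ (∫⁻ x, k x) * ∫⁻ x, k x * φ x ^ 2 := by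
  have h := ENNReal.lintegral_mul_le_Lp_mul_Lq (volume.withDensity k)
    (p := 2) (q := 2) (by rw [Real.holderConjugate_iff]; norm_num) (f := fun _ => 1) (g := φ)
    (by fun_prop) hφ.aemeasurable
  have h2 := pow_le_pow_left₀ zero_le h 2
  rw [mul_pow, ← ENNReal.rpow_natCast, ← ENNReal.rpow_natCast, ← ENNReal.rpow_natCast,
    ← ENNReal.rpow_mul, ← ENNReal.rpow_mul] at h2
  rw [lintegral_withDensity_eq_lintegral_mul _ hk (by fun_prop),
    lintegral_withDensity_eq_lintegral_mul _ hk (by fun_prop),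
    lintegral_withDensity_eq_lintegral_mul _ hk (by fun_prop)] at h2
  simpa using h2

lemma sq_integrable {g : ℝ → ℂ} (hg : Continuous g) (hA : ∫⁻ s, ‖g s‖ₑ ^ 2 ≠ ⊤) :
    Integrable (fun s => ‖g s‖ ^ 2) ∧ ∫ s, ‖g s‖ ^ 2 = (∫⁻ s, ‖g s‖ₑ ^ 2).toReal := by
  have e : ∀ s, ENNReal.ofReal (‖g s‖ ^ 2) = ‖g s‖ₑ ^ 2 := fun s => by
    rw [ENNReal.ofReal_pow (norm_nonneg _), ofReal_norm]
  constructor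
  · refine ⟨by fun_prop, ?_⟩
    rw [hasFiniteIntegral_iff_ofReal (Eventually.of_forall fun s => by positivity)]
    simp_rw [e]
    exact hA.lt_top
  · rw [integral_eq_lintegral_of_nonneg_ae (Eventually.of_forall fun s => by positivity)
      (by fun_prop)]
    simp_rw [e]

lemma exp_int (l : ℝ) (hl : 0 < l) (s : ℝ) :
    IntegrableOn (fun x => Real.exp (-l * (x - s))) (Ioi s) ∧
      ∫ x in Ioi s, Real.exp (-l * (x - s)) = 1 / l := by
  have h1 := integrableOn_exp_mul_Ioi (a := -l) (by linarith) s
  have h2 := integral_exp_mul_Ioi (a := -l) (by linarith) s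
  have e : (fun x => Real.exp (-l * (x - s))) = fun x => Real.exp (l * s) * Real.exp (-l * x) := by
    funext x; rw [← Real.exp_add]; ring_nf
  rw [e]
  refine ⟨h1.const_mul _, ?_⟩
  rw [integral_const_mul, h2, mul_div_assoc', mul_neg, ← Real.exp_add]
  ring_nf
  simp

lemma ode_pos (l : ℝ) (hl : 0 < l) (g : ℝ → ℂ) (hg : Continuous g)
    (hA : ∫⁻ s, ‖g s‖ₑ ^ 2 ≠ ⊤) :
    ∃ v : ℝ → ℂ, (∀ s, HasDerivAt v (l * v s + g s) s) ∧
      (∫⁻ s, ‖v s‖ₑ ^ 2 ≤ ENNReal.ofReal (1 / l ^ 2) * ∫⁻ s, ‖g s‖ₑ ^ 2) ∧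
      ∀ s B, (∀ x, |x - s| ≤ 1 → ‖g x‖ ≤ B) →
        ‖v s‖ ≤ B + Real.exp (-l / 2) * (1 / l + (∫⁻ s, ‖g s‖ₑ ^ 2).toReal) := by
  obtain ⟨hi, hie⟩ := sq_integrable hg hA
  -- basic integrability
  have key : ∀ s, IntegrableOn (fun x => (Real.exp (-l * (x - s)) : ℂ) * g x) (Ioi s) := by
    intro s
    have h1 := (exp_int l hl s).1
    have h1' : Integrable (fun x => Real.exp (-l * (x - s)) + ‖g x‖ ^ 2) (volume.restrict (Ioi s)) :=
      Integrable.add h1 hi.integrableOn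
    refine Integrable.mono' h1' (by fun_prop) ?_
    refine (ae_restrict_iff' measurableSet_Ioi).2 (Eventually.of_forall fun x hx => ?_)
    rw [norm_mul, Complex.norm_real, Real.norm_of_nonneg (Real.exp_pos _).le]
    have h3 : Real.exp (-l * (x - s)) ≤ 1 := by
      rw [Real.exp_le_one_iff]
      have : 0 < x - s := sub_pos.2 hx
      nlinarith
    have h4 := Real.exp_pos (-l * (x - s))
    nlinarith [sq_nonneg (‖g x‖ - 1), norm_nonneg (g x), sq_nonneg (‖g x‖ - Real.exp (-l * (x - s)))]
  have key2 : ∀ s a, IntegrableOn (fun x => (Real.exp (-l * (x - a)) : ℂ) * g x) (Ioi s) := by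
    intro s a
    have := (key s).const_mul ((Real.exp (-l * (s - a)) : ℂ))
    refine Eq.mp ?_ this
    congr 1
    funext x
    rw [← mul_assoc, ← Complex.ofReal_mul, ← Real.exp_add]
    ring_nf
  refine ⟨fun s => - ∫ x in Ioi s, (Real.exp (-l * (x - s)) : ℂ) * g x, ?_, ?_, ?_⟩
  · intro s
    have e1 : (fun s => - ∫ x in Ioi s, (Real.exp (-l * (x - s)) : ℂ) * g x) =
      fun s => (Real.exp (l * s) : ℂ) * ((∫ x in (0:ℝ)..s, (Real.exp (-l * (x - 0)) : ℂ) * g x)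
        - ∫ x in Ioi (0:ℝ), (Real.exp (-l * (x - 0)) : ℂ) * g x) := by
      funext s
      have h := intervalIntegral.integral_interval_add_Ioi (key2 0 0) (key2 s 0)
      rw [← h]
      have : (∫ x in (0:ℝ)..s, (Real.exp (-l * (x - 0)) : ℂ) * g x) -
         ((∫ x in (0:ℝ)..s, (Real.exp (-l * (x - 0)) : ℂ) * g x) +
          ∫ x in Ioi s, (Real.exp (-l * (x - 0)) : ℂ) * g x) =
          - ∫ x in Ioi s, (Real.exp (-l * (x - 0)) : ℂ) * g x := by ring
      rw [this, mul_neg, ← integral_const_mul]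
      congr 2
      funext x
      rw [← mul_assoc, ← Complex.ofReal_mul, ← Real.exp_add]
      ring_nf
    rw [e1]
    simp only
    have hc : Continuous fun x : ℝ => (Real.exp (-l * (x - 0)) : ℂ) * g x := by fun_prop
    have hd := (hc.integral_hasStrictDerivAt 0 s).hasDerivAt
    have hx : HasDerivAt (fun s : ℝ => (Real.exp (l * s) : ℂ)) ((Real.exp (l * s) * l : ℝ) : ℂ) s := by
      have : HasDerivAt (fun s : ℝ => Real.exp (l * s)) (Real.exp (l * s) * l) s := by
        simpa using ((hasDerivAt_id s).const_mul l).exp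
      exact this.ofReal_comp
    have := hx.mul (hd.sub_const (∫ x in Ioi (0:ℝ), (Real.exp (-l * (x - 0)) : ℂ) * g x))
    refine this.congr_deriv ?_
    have h5 : (Real.exp (l * s) : ℂ) * ((Real.exp (-l * (s - 0)) : ℂ) * g s) = g s := by
      rw [← mul_assoc, ← Complex.ofReal_mul, ← Real.exp_add]
      simp
    rw [h5]
    push_cast
    ring
  · set k : ℝ → ENNReal := (Ioi (0:ℝ)).indicator fun x => ENNReal.ofReal (Real.exp (-l * x)) with hk
    have hkm : Measurable k := by
      apply Measurable.indicator (by fun_prop) measurableSet_Ioi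
    have hki : ∫⁻ x, k x = ENNReal.ofReal (1 / l) := by
      have := exp_int l hl 0
      simp only [sub_zero] at this
      rw [hk, lintegral_indicator measurableSet_Ioi, ← ofReal_integral_eq_lintegral_ofReal this.1
        (Eventually.of_forall fun x => (Real.exp_pos _).le), this.2]
    have hv : ∀ s, ‖- ∫ x in Ioi s, (Real.exp (-l * (x - s)) : ℂ) * g x‖ₑ ≤
        ∫⁻ x, k (x - s) * ‖g x‖ₑ := by
      intro s
      rw [enorm_neg]
      refine (enorm_integral_le_lintegral_enorm _).trans ?_
      rw [← lintegral_indicator measurableSet_Ioi]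
      refine lintegral_mono fun x => ?_
      by_cases hx : x ∈ Ioi s
      · have : x - s ∈ Ioi (0:ℝ) := by rw [mem_Ioi] at hx ⊢; linarith
        rw [indicator_of_mem hx, hk]
        simp only
        rw [indicator_of_mem this, enorm_mul]
        refine le_of_eq ?_
        congr 1
        rw [← ofReal_norm, Complex.norm_real, Real.norm_of_nonneg (Real.exp_pos _).le]
      · rw [indicator_of_notMem hx]; exact zero_le
    calc ∫⁻ s, ‖- ∫ x in Ioi s, (Real.exp (-l * (x - s)) : ℂ) * g x‖ₑ ^ 2
        ≤ ∫⁻ s, ENNReal.ofReal (1 / l) * ∫⁻ x, k (x - s) * ‖g x‖ₑ ^ 2 := by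
          refine lintegral_mono fun s => ?_
          refine (pow_le_pow_left₀ zero_le (hv s) 2).trans ?_
          refine (cs_weight (k := fun x => k (x - s)) (by fun_prop) (by fun_prop)).trans ?_
          rw [lintegral_sub_right_eq_self k s, hki]
      _ = ENNReal.ofReal (1 / l) * ∫⁻ s, ∫⁻ x, k (x - s) * ‖g x‖ₑ ^ 2 := by
          rw [lintegral_const_mul']
          exact ENNReal.ofReal_ne_top
      _ = ENNReal.ofReal (1 / l) * ∫⁻ x, ∫⁻ s, k (x - s) * ‖g x‖ₑ ^ 2 := by
          rw [lintegral_lintegral_swap]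
          apply Measurable.aemeasurable
          have := hg.measurable
          unfold Function.uncurry
          fun_prop
      _ = ENNReal.ofReal (1 / l) * ∫⁻ x, ENNReal.ofReal (1 / l) * ‖g x‖ₑ ^ 2 := by
          congr 1
          refine lintegral_congr fun x => ?_
          rw [lintegral_mul_const _ (by fun_prop), lintegral_sub_left_eq_self k x, hki]
      _ = _ := by
          rw [lintegral_const_mul' _ _ ENNReal.ofReal_ne_top, ← mul_assoc,
            ← ENNReal.ofReal_mul (by positivity)]
          congr 2
          field_simp
  · intro s B hB
    have hB0 : 0 ≤ B := (norm_nonneg _).trans (hB s (by simp))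
    rw [norm_neg]
    refine (norm_integral_le_integral_norm _).trans ?_
    rw [← hie]
    have h1 := exp_int l hl s
    have hb1 : Integrable (fun x => (Ioc s (s+1)).indicator (fun _ => B) x) (volume.restrict (Ioi s)) := by
      refine Integrable.restrict ?_
      rw [integrable_indicator_iff measurableSet_Ioc]
      simp
    have hb2 : Integrable (fun x => Real.exp (-l/2) * (Real.exp (-l * (x - s)) + ‖g x‖^2))
      (volume.restrict (Ioi s)) := (h1.1.add hi.integrableOn).const_mul _
    calc ∫ x in Ioi s, ‖(Real.exp (-l * (x - s)) : ℂ) * g x‖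
        ≤ ∫ x in Ioi s, ((Ioc s (s+1)).indicator (fun _ => B) x +
            Real.exp (-l/2) * (Real.exp (-l * (x - s)) + ‖g x‖^2)) := by
          refine setIntegral_mono_on (key s).norm (hb1.add hb2) measurableSet_Ioi fun x hx => ?_
          have hx' : s < x := hx
          rw [norm_mul, Complex.norm_real, Real.norm_of_nonneg (Real.exp_pos _).le]
          by_cases h : x ≤ s + 1
          · rw [indicator_of_mem (show x ∈ Ioc s (s+1) from ⟨hx, h⟩)]
            have h2 := hB x (by rw [abs_le]; constructor <;> linarith)
            have h3 : Real.exp (-l * (x - s)) ≤ 1 := by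
              rw [Real.exp_le_one_iff]
              have : 0 < x - s := sub_pos.2 hx
              nlinarith
            have : Real.exp (-l * (x - s)) * ‖g x‖ ≤ B := by
              have := mul_le_mul h3 h2 (norm_nonneg _) zero_le_one
              simpa using this
            have : 0 ≤ Real.exp (-l/2) * (Real.exp (-l * (x - s)) + ‖g x‖^2) := by positivity
            linarith
          · rw [indicator_of_notMem (fun h' => h h'.2), zero_add]
            push Not at h
            set a := Real.exp (-l * (x - s) / 2) with ha
            have e : Real.exp (-l * (x - s)) = a ^ 2 := by
              rw [ha, ← Real.exp_nat_mul]; congr 1; push_cast; ring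
            have h5 : a ≤ Real.exp (-l/2) := by
              rw [ha, Real.exp_le_exp]
              nlinarith
            have h6 : 0 < a := Real.exp_pos _
            rw [e]
            calc a ^ 2 * ‖g x‖ = a * (a * ‖g x‖) := by ring
              _ ≤ Real.exp (-l/2) * (a * ‖g x‖) := by gcongr
              _ ≤ _ := by
                gcongr
                nlinarith [sq_nonneg (a - ‖g x‖), norm_nonneg (g x)]
      _ = (∫ x in Ioi s, (Ioc s (s+1)).indicator (fun _ => B) x) +
            Real.exp (-l/2) * ((∫ x in Ioi s, Real.exp (-l * (x - s))) + ∫ x in Ioi s, ‖g x‖^2) := by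
          rw [integral_add hb1 hb2, integral_const_mul, integral_add h1.1 hi.integrableOn]
      _ ≤ _ := by
          rw [h1.2]
          have : ∫ x in Ioi s, (Ioc s (s+1)).indicator (fun _ => B) x = B := by
            rw [setIntegral_indicator measurableSet_Ioc,
              inter_eq_right.2 (show Ioc s (s+1) ⊆ Ioi s from fun x hx => hx.1)]
            simp
          rw [this]
          gcongr _ + _ * (_ + ?_)
          exact setIntegral_le_integral hi (Eventually.of_forall fun x => by positivity)

lemma ode_ne (l : ℝ) (hl : l ≠ 0) (g : ℝ → ℂ) (hg : Continuous g)
    (hA : ∫⁻ s, ‖g s‖ₑ ^ 2 ≠ ⊤) :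
    ∃ v : ℝ → ℂ, (∀ s, HasDerivAt v (l * v s + g s) s) ∧
      (∫⁻ s, ‖v s‖ₑ ^ 2 ≤ ENNReal.ofReal (1 / l ^ 2) * ∫⁻ s, ‖g s‖ₑ ^ 2) ∧
      ∀ s B, (∀ x, |x - s| ≤ 1 → ‖g x‖ ≤ B) →
        ‖v s‖ ≤ B + Real.exp (-|l| / 2) * (1 / |l| + (∫⁻ s, ‖g s‖ₑ ^ 2).toReal) := by
  rcases lt_or_gt_of_ne hl with h | h
  · have e : ∫⁻ s, ‖-g (-s)‖ₑ ^ 2 = ∫⁻ s, ‖g s‖ₑ ^ 2 := by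
      simp_rw [enorm_neg]
      exact lintegral_neg_eq_self (fun s => ‖g s‖ₑ ^ 2)
    obtain ⟨v, h1, h2, h3⟩ := ode_pos (-l) (by linarith) (fun s => - g (-s)) (by fun_prop)
      (by rw [e]; exact hA)
    refine ⟨fun s => v (-s), ?_, ?_, ?_⟩
    · intro s
      have := (h1 (-s)).scomp s (hasDerivAt_neg s)
      refine this.congr_deriv ?_
      simp
    · rw [lintegral_neg_eq_self (fun s => ‖v s‖ₑ ^ 2), ← e]
      simpa using h2
    · intro s B hB
      have := h3 (-s) B (fun x hx => by
        rw [norm_neg]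
        apply hB
        rw [← abs_neg]; convert hx using 2; ring)
      rw [e] at this
      rwa [abs_of_neg h]
  · rw [abs_of_pos h]
    exact ode_pos l h g hg hA

def exq (m : ℤ) (t : ℝ) : ℂ := Complex.exp (((2 * π * m * t : ℝ) : ℂ) * Complex.I)

def cfq (h : ℝ × ℝ → ℂ) (m : ℤ) (s : ℝ) : ℂ := ∫ t in (0:ℝ)..1, exq (-m) t * h (s, t)

def Eq0 (δ : ℝ) (h : ℝ × ℝ → ℂ) : ENNReal :=
  ∫⁻ p in (univ : Set ℝ) ×ˢ Icc (0:ℝ) 1, ‖h p‖ₑ ^ 2 * ENNReal.ofReal (Real.exp (2 * δ * p.1))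

@[fun_prop]
lemma exq_cont (m : ℤ) : Continuous (exq m) := by unfold exq; fun_prop

lemma exq_norm (m : ℤ) (t : ℝ) : ‖exq m t‖ = 1 := Complex.norm_exp_ofReal_mul_I _

lemma exq_mul (m n : ℤ) (t : ℝ) : exq m t * exq n t = exq (m + n) t := by
  unfold exq; rw [← Complex.exp_add]; push_cast; ring_nf

lemma exq_zero (t : ℝ) : exq 0 t = 1 := by simp [exq]

lemma exq_int (m n : ℤ) : exq m n = 1 := by
  unfold exq
  rw [Complex.exp_eq_one_iff]
  exact ⟨m * n, by push_cast; ring⟩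

lemma exq_add_one (m : ℤ) (t : ℝ) : exq m (t + 1) = exq m t := by
  have h := exq_int m 1
  unfold exq at *
  rw [show ((2 * π * m * (t + 1) : ℝ) : ℂ) * Complex.I = ((2 * π * m * t : ℝ) : ℂ) * Complex.I +
    ((2 * π * m * ((1:ℤ):ℝ) : ℝ) : ℂ) * Complex.I by push_cast; ring, Complex.exp_add, h, mul_one]

lemma exq_deriv (m : ℤ) (t : ℝ) :
    HasDerivAt (exq m) (2 * π * m * Complex.I * exq m t) t := by
  have h1 : HasDerivAt (fun t : ℝ => ((2 * π * m * t : ℝ) : ℂ) * Complex.I)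
      (2 * π * m * Complex.I) t := by
    have : HasDerivAt (fun t : ℝ => 2 * π * m * t) (2 * π * m) t := by
      simpa using (hasDerivAt_id t).const_mul (2 * π * m)
    refine (this.ofReal_comp.mul_const Complex.I).congr_deriv ?_
    push_cast; ring
  refine h1.cexp.congr_deriv ?_
  unfold exq; ring

lemma exq_fourier (m : ℤ) (t : ℝ) : fourier m ((t : ℝ) : AddCircle (1:ℝ)) = exq m t := by
  rw [fourier_coe_apply]; unfold exq; congr 1; push_cast; ring

lemma cfq_eq (h : ℝ × ℝ → ℂ) (m : ℤ) (s : ℝ) :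
    cfq h m s = fourierCoeffOn (zero_lt_one (α := ℝ)) (fun t => h (s, t)) m := by
  rw [fourierCoeffOn_eq_integral]
  unfold cfq
  simp only [sub_zero, div_one, one_smul]
  refine intervalIntegral.integral_congr fun t _ => ?_
  simp only [smul_eq_mul]
  congr 1
  rw [← exq_fourier]
  simp

lemma parseval_slice {h : ℝ × ℝ → ℂ} (hc : Continuous h) (s : ℝ) :
    ∫⁻ t in Icc (0:ℝ) 1, ‖h (s, t)‖ₑ ^ 2 = ∑' m, ‖cfq h m s‖ₑ ^ 2 := by
  have hc' : Continuous fun t => h (s, t) := by fun_prop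
  have e : ∀ z : ℂ, ENNReal.ofReal (‖z‖ ^ 2) = ‖z‖ₑ ^ 2 := fun z => by
    rw [ENNReal.ofReal_pow (norm_nonneg _), ofReal_norm]
  have hL : MemLp (fun t => h (s, t)) 2 (volume.restrict (Ioc (0:ℝ) 1)) := by
    rw [memLp_two_iff_integrable_sq_norm (by fun_prop)]
    exact (Continuous.integrableOn_Icc (by fun_prop)).mono_set Ioc_subset_Icc_self
  have h1 := hasSum_sq_fourierCoeffOn zero_lt_one hL
  simp only [sub_zero, inv_one, one_smul, ← cfq_eq] at h1
  simp_rw [← e]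
  rw [← ENNReal.ofReal_tsum_of_nonneg (fun m => by positivity) h1.summable, h1.tsum_eq,
    intervalIntegral.integral_of_le zero_le_one, ← integral_Icc_eq_integral_Ioc,
    ofReal_integral_eq_lintegral_ofReal (Continuous.integrableOn_Icc (by fun_prop))
      (Eventually.of_forall fun x => by positivity)]

@[fun_prop]
lemma cfq_cont {h : ℝ × ℝ → ℂ} (hc : Continuous h) (m : ℤ) : Continuous (cfq h m) := by
  unfold cfq
  apply intervalIntegral.continuous_parametric_intervalIntegral_of_continuous' 
  fun_prop

lemma Eq0_eq (δ : ℝ) {h : ℝ × ℝ → ℂ} (hc : Continuous h) :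
    Eq0 δ h = ∑' m, ∫⁻ s, ‖cfq h m s‖ₑ ^ 2 * ENNReal.ofReal (Real.exp (2 * δ * s)) := by
  have hm := hc.measurable
  unfold Eq0
  rw [Measure.volume_eq_prod, ← Measure.prod_restrict, Measure.restrict_univ,
    lintegral_prod _ (by fun_prop), ← lintegral_tsum]
  · refine lintegral_congr fun s => ?_
    rw [ENNReal.tsum_mul_right, ← parseval_slice hc]
    exact lintegral_mul_const' (ENNReal.ofReal (Real.exp (2 * δ * s)))
      (fun t => ‖h (s, t)‖ₑ ^ 2) ENNReal.ofReal_ne_top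
  · intro m
    have := (cfq_cont hc m).measurable
    fun_prop

lemma cfq_bound {h : ℝ × ℝ → ℂ} {m : ℤ} {s B : ℝ} 
    (hB : ∀ t ∈ Icc (0:ℝ) 1, ‖h (s, t)‖ ≤ B) : ‖cfq h m s‖ ≤ B := by
  have := intervalIntegral.norm_integral_le_of_norm_le_const (a := 0) (b := 1) (C := B)
    (f := fun t => exq (-m) t * h (s, t)) (fun t ht => by
      rw [uIoc_of_le zero_le_one] at ht
      rw [norm_mul, exq_norm, one_mul]
      exact hB t ⟨ht.1.le, ht.2⟩)
  simp only [sub_zero, abs_one, mul_one] at this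
  exact this

lemma pdS_deriv {h : ℝ × ℝ → ℂ} (hh : Differentiable ℝ h) (s t : ℝ) :
    HasDerivAt (fun s => h (s, t)) (pdS h (s, t)) s := by
  have h1 : HasDerivAt (fun s : ℝ => (s, t)) ((1:ℝ), (0:ℝ)) s :=
    (hasDerivAt_id s).prodMk (hasDerivAt_const s t)
  exact (hh (s, t)).hasFDerivAt.comp_hasDerivAt s h1

lemma pdT_deriv {h : ℝ × ℝ → ℂ} (hh : Differentiable ℝ h) (s t : ℝ) :
    HasDerivAt (fun t => h (s, t)) (pdT h (s, t)) t := by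
  have h1 : HasDerivAt (fun t : ℝ => (s, t)) ((0:ℝ), (1:ℝ)) t :=
    (hasDerivAt_const t s).prodMk (hasDerivAt_id t)
  exact (hh (s, t)).hasFDerivAt.comp_hasDerivAt t h1

@[fun_prop]
lemma pdS_cont {h : ℝ × ℝ → ℂ} (hh : ContDiff ℝ 1 h) : Continuous (pdS h) := by
  unfold pdS
  exact (hh.continuous_fderiv (by simp)).clm_apply continuous_const

@[fun_prop]
lemma pdT_cont {h : ℝ × ℝ → ℂ} (hh : ContDiff ℝ 1 h) : Continuous (pdT h) := by
  unfold pdT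
  exact (hh.continuous_fderiv (by simp)).clm_apply continuous_const

lemma cfq_deriv {h : ℝ × ℝ → ℂ} (hh : ContDiff ℝ 1 h) (m : ℤ) (s : ℝ) :
    HasDerivAt (cfq h m) (cfq (pdS h) m s) s := by
  have hd : Differentiable ℝ h := hh.differentiable (by simp)
  have hc := hh.continuous
  have hS := pdS_cont hh
  obtain ⟨C, hC⟩ := ((isCompact_Icc (a := s - 1) (b := s + 1)).prod
    (isCompact_Icc (a := (0:ℝ)) (b := 1))).exists_bound_of_continuousOn hS.continuousOn
  refine (intervalIntegral.hasDerivAt_integral_of_dominated_loc_of_deriv_le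
    (F := fun s t => exq (-m) t * h (s, t)) (F' := fun s t => exq (-m) t * pdS h (s, t))
    (bound := fun _ => C) (Icc_mem_nhds (by linarith : s - 1 < s) (by linarith : s < s + 1))
    (Eventually.of_forall fun x => ?_) ?_ ?_ ?_ ?_ ?_).2
  · exact Continuous.aestronglyMeasurable (by fun_prop)
  · exact Continuous.intervalIntegrable (by fun_prop) _ _
  · exact Continuous.aestronglyMeasurable (by fun_prop)
  · refine Eventually.of_forall fun t ht x hx => ?_
    rw [uIoc_of_le zero_le_one] at ht
    rw [norm_mul, exq_norm, one_mul]
    exact hC (x, t) ⟨hx, ht.1.le, ht.2⟩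
  · exact intervalIntegrable_const
  · exact Eventually.of_forall fun t ht x hx => (pdS_deriv hd x t).const_mul _

lemma cfq_pdT {h : ℝ × ℝ → ℂ} (hh : ContDiff ℝ 1 h) (hp : ∀ s t : ℝ, h (s, t + 1) = h (s, t))
    (m : ℤ) (s : ℝ) :
    cfq (pdT h) m s = 2 * π * m * Complex.I * cfq h m s := by
  have hd : Differentiable ℝ h := hh.differentiable (by simp)
  have hc := hh.continuous
  have hS := pdT_cont hh
  have h1 := intervalIntegral.integral_mul_deriv_eq_deriv_mul (a := 0) (b := 1)
    (u := exq (-m)) (v := fun t => h (s, t)) (u' := fun t => 2 * π * (-m : ℤ) * Complex.I * exq (-m) t)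
    (v' := fun t => pdT h (s, t)) (fun t _ => exq_deriv _ _) (fun t _ => pdT_deriv hd s t)
    (Continuous.intervalIntegrable (by fun_prop) _ _)
    (Continuous.intervalIntegrable (by fun_prop) _ _)
  unfold cfq
  rw [h1]
  have e0 : exq (-m) 0 = 1 := by simpa using exq_int (-m) 0
  have e1 : exq (-m) 1 = 1 := by simpa using exq_int (-m) 1
  have e2 : h (s, 1) = h (s, 0) := by simpa using hp s 0
  rw [e0, e1, e2, sub_self, zero_sub, ← intervalIntegral.integral_const_mul,
    ← intervalIntegral.integral_neg]
  refine intervalIntegral.integral_congr fun t _ => ?_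
  push_cast
  ring

lemma cfq_inv {h : ℝ × ℝ → ℂ} (hc : Continuous h) (hp : ∀ s t : ℝ, h (s, t + 1) = h (s, t))
    (s : ℝ) (hs : Summable fun m => cfq h m s) (t : ℝ) :
    HasSum (fun m => cfq h m s * exq m t) (h (s, t)) := by
  have hper : Function.Periodic (fun t => h (s, t)) 1 := fun t => hp s t
  let F : C(AddCircle (1:ℝ), ℂ) := ⟨hper.lift, by
    apply continuous_coinduced_dom.mpr
    exact (by fun_prop : Continuous fun t => h (s, t))⟩
  have hF : ∀ m, fourierCoeff F m = cfq h m s := by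
    intro m
    rw [fourierCoeff_eq_intervalIntegral F m 0]
    unfold cfq
    simp only [div_one, one_smul, zero_add]
    refine intervalIntegral.integral_congr fun t _ => ?_
    simp only [smul_eq_mul]
    rw [exq_fourier]
    rfl
  have := has_pointwise_sum_fourier_series_of_summable (f := F) (by
    convert hs using 1; funext m; exact hF m) (t : AddCircle (1:ℝ))
  refine Eq.mp ?_ this
  congr 1
  funext m
  rw [hF, exq_fourier, smul_eq_mul]

def Rapq (c : ℤ → ℝ → ℂ) : Prop :=
  ∀ (R : ℝ) (b : ℕ), ∃ C, ∀ (m : ℤ) (s : ℝ), |s| ≤ R → |(m:ℝ)| ^ b * ‖c m s‖ ≤ C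

def Goodq (c : ℤ → ℝ → ℂ) : Prop :=
  ∃ d : ℕ → ℤ → ℝ → ℂ, d 0 = c ∧ (∀ a m s, HasDerivAt (d a m) (d (a + 1) m s) s) ∧ ∀ a, Rapq (d a)

def serq (c : ℤ → ℝ → ℂ) (p : ℝ × ℝ) : ℂ := ∑' m, c m p.1 * exq m p.2

lemma Rapq.add {c d : ℤ → ℝ → ℂ} (hc : Rapq c) (hd : Rapq d) : Rapq (fun m s => c m s + d m s) := by
  intro R b
  obtain ⟨C, hC⟩ := hc R b
  obtain ⟨D, hD⟩ := hd R b
  refine ⟨C + D, fun m s hs => ?_⟩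
  have h1 := hC m s hs
  have h2 := hD m s hs
  calc |(m:ℝ)| ^ b * ‖c m s + d m s‖ ≤ |(m:ℝ)| ^ b * (‖c m s‖ + ‖d m s‖) := by
        gcongr; exact norm_add_le _ _
    _ ≤ _ := by linarith

lemma Rapq.smul {c : ℤ → ℝ → ℂ} (hc : Rapq c) (z : ℂ) : Rapq (fun m s => z * c m s) := by
  intro R b
  obtain ⟨C, hC⟩ := hc R b
  refine ⟨‖z‖ * C, fun m s hs => ?_⟩
  have h1 := hC m s hs
  rw [norm_mul]
  calc |(m:ℝ)| ^ b * (‖z‖ * ‖c m s‖) = ‖z‖ * (|(m:ℝ)| ^ b * ‖c m s‖) := by ring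
    _ ≤ _ := by gcongr

lemma Rapq.mulm {c : ℤ → ℝ → ℂ} (hc : Rapq c) : Rapq (fun m s => (m:ℂ) * c m s) := by
  intro R b
  obtain ⟨C, hC⟩ := hc R (b + 1)
  refine ⟨C, fun m s hs => ?_⟩
  have h1 := hC m s hs
  rw [norm_mul, Complex.norm_intCast]
  calc _ = |(m:ℝ)| ^ (b+1) * ‖c m s‖ := by ring
    _ ≤ _ := h1

lemma sum_int_aux : Summable fun m : ℤ => 1 / (1 + (m:ℝ) ^ 2) := by
  have h1 : Summable fun m : ℤ => 1 / (m:ℝ) ^ 2 := Real.summable_one_div_int_pow.2 (by norm_num)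
  have h2 : Summable fun m : ℤ => if m = 0 then (1:ℝ) else 0 :=
    summable_of_ne_finset_zero (s := {0}) (by intro b hb; simp at hb; simp [hb])
  refine Summable.of_nonneg_of_le (fun m => by positivity) (fun m => ?_) (h1.add h2)
  by_cases h : m = 0
  · simp [h]
  · simp only [h, if_false, add_zero]
    have : (m:ℝ) ≠ 0 := by exact_mod_cast h
    have : 0 < (m:ℝ)^2 := by positivity
    gcongr
    linarith

lemma Rapq.bd {c : ℤ → ℝ → ℂ} (hc : Rapq c) (R : ℝ) :
    ∃ w : ℤ → ℝ, Summable w ∧ ∀ m s, |s| ≤ R → ‖c m s‖ ≤ w m := by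
  obtain ⟨C, hC⟩ := hc R 0
  obtain ⟨D, hD⟩ := hc R 2
  refine ⟨fun m => (C + D) * (1 / (1 + (m:ℝ) ^ 2)), sum_int_aux.mul_left _, fun m s hs => ?_⟩
  have h1 := hC m s hs
  have h2 := hD m s hs
  show _ ≤ (C + D) * (1 / (1 + (m:ℝ) ^ 2))
  rw [mul_one_div, le_div_iff₀ (by positivity)]
  rw [sq_abs] at h2
  simp only [pow_zero, one_mul] at h1
  nlinarith

lemma Rapq.summable {c : ℤ → ℝ → ℂ} (hc : Rapq c) (s : ℝ) : Summable fun m => c m s := by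
  obtain ⟨w, hw, h⟩ := hc.bd |s|
  exact Summable.of_norm_bounded hw fun m => h m s le_rfl

lemma Rapq.summable' {c : ℤ → ℝ → ℂ} (hc : Rapq c) (s t : ℝ) :
    Summable fun m => c m s * exq m t := by
  obtain ⟨w, hw, h⟩ := hc.bd |s|
  exact Summable.of_norm_bounded hw fun m => by
    rw [norm_mul, exq_norm, mul_one]; exact h m s le_rfl

lemma Goodq.rap {c : ℤ → ℝ → ℂ} (hc : Goodq c) : Rapq c := by
  obtain ⟨d, rfl, h1, h2⟩ := hc; exact h2 0

lemma Goodq.deriv {c : ℤ → ℝ → ℂ} (hc : Goodq c) :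
    ∃ c', (∀ m s, HasDerivAt (c m) (c' m s) s) ∧ Goodq c' := by
  obtain ⟨d, rfl, h1, h2⟩ := hc
  exact ⟨d 1, h1 0, fun a => d (a + 1), rfl, fun a => h1 (a + 1), fun a => h2 (a + 1)⟩

def mulT (c : ℤ → ℝ → ℂ) : ℤ → ℝ → ℂ := fun m s => (2 * π * Complex.I) * ((m:ℂ) * c m s)

lemma Goodq.mulT {c : ℤ → ℝ → ℂ} (hc : Goodq c) : Goodq (mulT c) := by
  obtain ⟨d, rfl, h1, h2⟩ := hc
  exact ⟨fun a => _root_.mulT (d a), rfl, fun a m s => ((h1 a m s).const_mul _).const_mul _,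
    fun a => (h2 a).mulm.smul _⟩

def Lq (a b : ℂ) : ℝ × ℝ →L[ℝ] ℂ :=
  (ContinuousLinearMap.fst ℝ ℝ ℝ).smulRight a + (ContinuousLinearMap.snd ℝ ℝ ℝ).smulRight b

lemma Lq_apply (a b : ℂ) (q : ℝ × ℝ) : Lq a b q = q.1 • a + q.2 • b := by simp [Lq]

lemma Lq_norm (a b : ℂ) : ‖Lq a b‖ ≤ ‖a‖ + ‖b‖ := by
  refine ContinuousLinearMap.opNorm_le_bound _ (by positivity) fun q => ?_
  rw [Lq_apply]
  refine (norm_add_le _ _).trans ?_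
  rw [norm_smul, norm_smul]
  have h1 : ‖q.1‖ ≤ ‖q‖ := norm_fst_le q
  have h2 : ‖q.2‖ ≤ ‖q‖ := norm_snd_le q
  have := mul_le_mul_of_nonneg_right h1 (norm_nonneg a)
  have := mul_le_mul_of_nonneg_right h2 (norm_nonneg b)
  linarith

lemma term_fderiv {c c' : ℤ → ℝ → ℂ} (hd : ∀ m s, HasDerivAt (c m) (c' m s) s) (m : ℤ) (p : ℝ × ℝ) :
    HasFDerivAt (fun p : ℝ × ℝ => c m p.1 * exq m p.2)
      (Lq (c' m p.1 * exq m p.2) (mulT c m p.1 * exq m p.2)) p := by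
  have h1 : HasFDerivAt (fun p : ℝ × ℝ => c m p.1) _ p :=
    (hd m p.1).hasFDerivAt.comp p (hasFDerivAt_fst (𝕜 := ℝ) (p := p))
  have h2 : HasFDerivAt (fun p : ℝ × ℝ => exq m p.2) _ p :=
    (exq_deriv m p.2).hasFDerivAt.comp p (hasFDerivAt_snd (𝕜 := ℝ) (p := p))
  refine (h1.mul h2).congr_fderiv ?_
  refine ContinuousLinearMap.ext fun q => ?_
  rw [Lq_apply]
  simp [mulT]
  ring

lemma serq_fderiv {c c' : ℤ → ℝ → ℂ} (hd : ∀ m s, HasDerivAt (c m) (c' m s) s)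
    (hc : Rapq c) (hc' : Rapq c') (p : ℝ × ℝ) :
    HasFDerivAt (serq c) (Lq (serq c' p) (serq (mulT c) p)) p := by
  obtain ⟨R, hR⟩ : ∃ R, |p.1| < R := ⟨|p.1| + 1, by linarith⟩
  have hT : Rapq (mulT c) := hc.mulm.smul _
  obtain ⟨w1, hw1, hb1⟩ := hc'.bd R
  obtain ⟨w2, hw2, hb2⟩ := hT.bd R
  have hS : IsOpen {p : ℝ × ℝ | |p.1| < R} := isOpen_lt (by fun_prop) (by fun_prop)
  have hconv : Convex ℝ {p : ℝ × ℝ | |p.1| < R} := by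
    have : {p : ℝ × ℝ | |p.1| < R} = (ContinuousLinearMap.fst ℝ ℝ ℝ) ⁻¹' (Ioo (-R) R) := by
      ext q; simp [abs_lt]
    rw [this]
    exact (convex_Ioo _ _).linear_preimage (ContinuousLinearMap.fst ℝ ℝ ℝ).toLinearMap
  have hbd : ∀ (m : ℤ) (x : ℝ × ℝ), |x.1| < R →
      ‖Lq (c' m x.1 * exq m x.2) (mulT c m x.1 * exq m x.2)‖ ≤ w1 m + w2 m := by
    intro m x hx
    refine (Lq_norm _ _).trans ?_
    rw [norm_mul, norm_mul, exq_norm, mul_one, mul_one]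
    exact add_le_add (hb1 m x.1 hx.le) (hb2 m x.1 hx.le)
  have key := hasFDerivAt_tsum_of_isPreconnected (hw1.add hw2) hS hconv.isPreconnected
    (fun m x _ => term_fderiv hd m x) hbd hR (hc.summable' _ _) hR
  refine key.congr_fderiv ?_
  have s1 : Summable fun m => Lq (c' m p.1 * exq m p.2) (mulT c m p.1 * exq m p.2) :=
    Summable.of_norm_bounded (hw1.add hw2) fun m => hbd m p hR
  refine ContinuousLinearMap.ext fun q => ?_
  have e := (ContinuousLinearMap.apply ℝ ℂ q).map_tsum s1
  simp only [ContinuousLinearMap.apply_apply, Lq_apply] at e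
  rw [e, Lq_apply, Summable.tsum_add, Summable.tsum_const_smul, Summable.tsum_const_smul]
  · rfl
  · exact hT.summable' _ _
  · exact hc'.summable' _ _
  · exact (hc'.summable' _ _).const_smul _
  · exact (hT.summable' _ _).const_smul _

lemma serq_contDiff_nat (n : ℕ) : ∀ c, Goodq c → ContDiff ℝ n (serq c) := by
  induction n with
  | zero =>
    intro c hc
    obtain ⟨c', h1, h2⟩ := hc.deriv
    have : Differentiable ℝ (serq c) := fun p => (serq_fderiv h1 hc.rap h2.rap p).differentiableAt
    exact_mod_cast contDiff_zero.2 this.continuous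
  | succ n ih =>
    intro c hc
    obtain ⟨c', h1, h2⟩ := hc.deriv
    have h := serq_fderiv h1 hc.rap h2.rap
    have e : fderiv ℝ (serq c) = fun p => Lq (serq c' p) (serq (mulT c) p) := funext fun p => (h p).fderiv
    push_cast
    rw [contDiff_succ_iff_fderiv]
    refine ⟨fun p => (h p).differentiableAt, by simp, ?_⟩
    rw [e]
    unfold Lq
    exact (contDiff_const.smulRight (ih _ h2)).add (contDiff_const.smulRight (ih _ hc.mulT))

lemma serq_contDiff {c : ℤ → ℝ → ℂ} (hc : Goodq c) : ContDiff ℝ (⊤ : ℕ∞) (serq c) :=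
  contDiff_infty.2 fun n => serq_contDiff_nat n c hc

lemma serq_per (c : ℤ → ℝ → ℂ) (s t : ℝ) : serq c (s, t + 1) = serq c (s, t) := by
  simp [serq, exq_add_one]

lemma serq_pdS {c c' : ℤ → ℝ → ℂ} (hd : ∀ m s, HasDerivAt (c m) (c' m s) s)
    (hc : Rapq c) (hc' : Rapq c') (p : ℝ × ℝ) : pdS (serq c) p = serq c' p := by
  unfold pdS; rw [(serq_fderiv hd hc hc' p).fderiv]; simp [Lq_apply]

lemma serq_pdT {c c' : ℤ → ℝ → ℂ} (hd : ∀ m s, HasDerivAt (c m) (c' m s) s)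
    (hc : Rapq c) (hc' : Rapq c') (p : ℝ × ℝ) : pdT (serq c) p = serq (mulT c) p := by
  unfold pdT; rw [(serq_fderiv hd hc hc' p).fderiv]; simp [Lq_apply]

lemma exq_integral (n : ℤ) : ∫ t in (0:ℝ)..1, exq n t = if n = 0 then 1 else 0 := by
  split_ifs with h
  · simp [h, exq_zero]
  · have hn : (2 * π * n * Complex.I : ℂ) ≠ 0 := by
      simp [h, Real.pi_ne_zero]
    have := intervalIntegral.integral_eq_sub_of_hasDerivAt (a := 0) (b := 1)
      (fun t _ => exq_deriv n t) (Continuous.intervalIntegrable (by fun_prop) _ _)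
    rw [intervalIntegral.integral_const_mul] at this
    have e0 : exq n 0 = 1 := by simpa using exq_int n 0
    have e1 : exq n 1 = 1 := by simpa using exq_int n 1
    rw [e0, e1, sub_self] at this
    exact (mul_eq_zero.1 this).resolve_left hn

lemma cfq_serq {c : ℤ → ℝ → ℂ} (hc : Rapq c) (m : ℤ) (s : ℝ) : cfq (serq c) m s = c m s := by
  obtain ⟨w, hw, hb⟩ := hc.bd |s|
  have h := intervalIntegral.hasSum_integral_of_dominated_convergence (μ := volume) (a := 0) (b := 1)
    (F := fun n t => exq (-m) t * (c n s * exq n t)) (f := fun t => exq (-m) t * serq c (s, t))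
    (fun n _ => w n) (fun n => Continuous.aestronglyMeasurable (by fun_prop))
    (fun n => Eventually.of_forall fun t _ => by
      rw [norm_mul, norm_mul, exq_norm, exq_norm, one_mul, mul_one]; exact hb n s le_rfl)
    (Eventually.of_forall fun t _ => hw) (by simp)
    (Eventually.of_forall fun t _ => ((hc.summable' s t).hasSum).mul_left _)
  have e : ∀ n, ∫ t in (0:ℝ)..1, exq (-m) t * (c n s * exq n t) = if n = m then c n s else 0 := by
    intro n
    have : ∀ t, exq (-m) t * (c n s * exq n t) = c n s * exq (-m + n) t := fun t => by
      rw [← exq_mul]; ring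
    simp_rw [this]
    rw [intervalIntegral.integral_const_mul, exq_integral]
    by_cases hnm : n = m
    · simp [hnm]
    · have : -m + n ≠ 0 := by omega
      simp [hnm, this]
  simp_rw [e] at h
  have h2 := hasSum_ite_eq m (c m s)
  unfold cfq
  refine h.unique ?_
  refine Eq.mp ?_ h2
  congr 1
  funext n
  split_ifs with hh
  · rw [hh]
  · rfl

lemma pdS_smooth {h : ℝ × ℝ → ℂ} (hh : ContDiff ℝ (⊤ : ℕ∞) h) : ContDiff ℝ (⊤ : ℕ∞) (pdS h) := by
  unfold pdS
  exact (hh.fderiv_right (m := (⊤ : ℕ∞)) (by simp)).clm_apply contDiff_const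

lemma pdT_smooth {h : ℝ × ℝ → ℂ} (hh : ContDiff ℝ (⊤ : ℕ∞) h) : ContDiff ℝ (⊤ : ℕ∞) (pdT h) := by
  unfold pdT
  exact (hh.fderiv_right (m := (⊤ : ℕ∞)) (by simp)).clm_apply contDiff_const

lemma fderiv_per {h : ℝ × ℝ → ℂ} (hp : ∀ s t : ℝ, h (s, t + 1) = h (s, t)) (s t : ℝ) :
    fderiv ℝ h (s, t + 1) = fderiv ℝ h (s, t) := by
  have e : (fun p : ℝ × ℝ => h (p + (0, 1))) = h := by
    funext p
    have h2 := hp p.1 p.2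
    have h3 : p + (0, 1) = (p.1, p.2 + 1) := by ext <;> simp
    rw [h3, h2]
  have h1 := fderiv_comp_add_right (𝕜 := ℝ) (f := h) (x := (s, t)) ((0:ℝ), (1:ℝ))
  rw [e] at h1
  rw [h1]
  simp

lemma pdS_per {h : ℝ × ℝ → ℂ} (hp : ∀ s t : ℝ, h (s, t + 1) = h (s, t)) (s t : ℝ) :
    pdS h (s, t + 1) = pdS h (s, t) := by unfold pdS; rw [fderiv_per hp]

lemma pdT_per {h : ℝ × ℝ → ℂ} (hp : ∀ s t : ℝ, h (s, t + 1) = h (s, t)) (s t : ℝ) :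
    pdT h (s, t + 1) = pdT h (s, t) := by unfold pdT; rw [fderiv_per hp]

lemma smooth_one {h : ℝ × ℝ → ℂ} (hh : ContDiff ℝ (⊤ : ℕ∞) h) : ContDiff ℝ 1 h :=
  hh.of_le (by exact_mod_cast le_top)

lemma cfq_rap {h : ℝ × ℝ → ℂ} (hh : ContDiff ℝ (⊤ : ℕ∞) h)
    (hp : ∀ s t : ℝ, h (s, t + 1) = h (s, t)) : Rapq (cfq h) := by
  intro R b
  induction b generalizing h with
  | zero =>
    obtain ⟨C, hC⟩ := ((isCompact_Icc (a := -R) (b := R)).prod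
      (isCompact_Icc (a := (0:ℝ)) (b := 1))).exists_bound_of_continuousOn hh.continuous.continuousOn
    refine ⟨C, fun m s hs => ?_⟩
    rw [pow_zero, one_mul]
    exact cfq_bound fun t ht => hC (s, t) ⟨abs_le.1 hs, ht⟩
  | succ b ih =>
    obtain ⟨C, hC⟩ := ih (pdT_smooth hh) (pdT_per hp)
    refine ⟨C, fun m s hs => ?_⟩
    have h1 := hC m s hs
    rw [cfq_pdT (smooth_one hh) hp] at h1
    have e : ‖(2 * π * m * Complex.I * cfq h m s : ℂ)‖ = 2 * π * (|(m:ℝ)| * ‖cfq h m s‖) := by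
      simp [abs_of_pos Real.pi_pos]; ring
    rw [e] at h1
    have hpi := Real.pi_gt_three
    have h0 : 0 ≤ |(m:ℝ)| ^ b * (|(m:ℝ)| * ‖cfq h m s‖) := by positivity
    have e2 : |(m:ℝ)| ^ (b+1) * ‖cfq h m s‖ = |(m:ℝ)| ^ b * (|(m:ℝ)| * ‖cfq h m s‖) := by ring
    rw [e2]
    nlinarith

lemma cfq_good {h : ℝ × ℝ → ℂ} (hh : ContDiff ℝ (⊤ : ℕ∞) h)
    (hp : ∀ s t : ℝ, h (s, t + 1) = h (s, t)) : Goodq (cfq h) := by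
  have key : ∀ a : ℕ, ContDiff ℝ (⊤ : ℕ∞) (pdS^[a] h) ∧
      ∀ s t : ℝ, (pdS^[a] h) (s, t + 1) = (pdS^[a] h) (s, t) := by
    intro a
    induction a with
    | zero => exact ⟨hh, hp⟩
    | succ a ih =>
      rw [Function.iterate_succ', Function.comp_apply]
      exact ⟨pdS_smooth ih.1, pdS_per ih.2⟩
  refine ⟨fun a => cfq (pdS^[a] h), rfl, fun a m s => ?_, fun a => cfq_rap (key a).1 (key a).2⟩
  simp only [Function.iterate_succ', Function.comp_apply]
  exact cfq_deriv (smooth_one (key a).1) m s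

lemma good_of_ode {c F : ℤ → ℝ → ℂ} (hF : Goodq F) (hc : Rapq c)
    (hd : ∀ (m : ℤ) s, HasDerivAt (c m) (2 * π * m * c m s + 2 * F m s) s) : Goodq c := by
  obtain ⟨d, rfl, h1, h2⟩ := hF
  let e : ℕ → ℤ → ℝ → ℂ := fun a => Nat.rec c
    (fun a ea m s => 2 * π * (m * ea m s) + 2 * d a m s) a
  have e0 : e 0 = c := rfl
  have e1 : ∀ a m s, e (a+1) m s = 2 * π * (m * e a m s) + 2 * d a m s := fun a m s => rfl
  have e1' : ∀ a, e (a+1) = fun m s => 2 * π * (m * e a m s) + 2 * d a m s := fun a => rfl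
  refine ⟨e, e0, ?_, ?_⟩
  · intro a
    induction a with
    | zero =>
      intro m s
      refine (hd m s).congr_deriv ?_
      rw [e1, e0]; ring
    | succ a ih =>
      intro m s
      rw [e1 (a+1), e1' a]
      exact (((ih m s).const_mul _).const_mul _).add ((h1 a m s).const_mul _)
  · intro a
    induction a with
    | zero => exact hc
    | succ a ih =>
      rw [e1']
      exact (ih.mulm.smul _).add ((h2 a).smul _)

lemma wt_mul (δ s : ℝ) (z : ℂ) : ‖((Real.exp (δ * s) : ℝ) : ℂ) * z‖ₑ ^ 2 =
    ‖z‖ₑ ^ 2 * ENNReal.ofReal (Real.exp (2 * δ * s)) := by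
  rw [enorm_mul, mul_pow, mul_comm]
  congr 1
  rw [← ofReal_norm, Complex.norm_real, Real.norm_of_nonneg (Real.exp_pos _).le,
    ← ENNReal.ofReal_pow (Real.exp_pos _).le, ← Real.exp_nat_mul]
  congr 2
  push_cast; ring

lemma lam_bound (δ : ℝ) (hδZ : ∀ m : ℤ, δ ≠ 2 * π * m) :
    ∃ c > 0, ∀ m : ℤ, c ≤ |δ + 2 * π * m| := by
  have hpi := Real.pi_pos
  refine ⟨|δ - 2 * π * round (δ / (2 * π))|, abs_pos.2 (sub_ne_zero.2 (hδZ _)), fun m => ?_⟩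
  have h := round_le (δ / (2 * π)) (-m)
  have e1 : δ - 2 * π * round (δ / (2 * π)) = (2 * π) * (δ / (2 * π) - round (δ / (2 * π))) := by
    field_simp
  have e2 : δ + 2 * π * m = (2 * π) * (δ / (2 * π) - ((-m : ℤ) : ℝ)) := by
    push_cast; field_simp; ring
  rw [e1, e2, abs_mul (2 * π), abs_mul (2 * π)]
  exact mul_le_mul_of_nonneg_left h (abs_nonneg _)

lemma lam_bound2 (δ : ℝ) (hδZ : ∀ m : ℤ, δ ≠ 2 * π * m) :
    ∃ K > 0, ∀ m : ℤ, 4 * (1 + (2 * π * m) ^ 2) * (1 / (δ + 2 * π * m) ^ 2) ≤ K := by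
  obtain ⟨c, hc, h⟩ := lam_bound δ hδZ
  refine ⟨4 * (2 + (1 + 2 * δ ^ 2) / c ^ 2), by positivity, fun m => ?_⟩
  have h1 : c ^ 2 ≤ (δ + 2 * π * m) ^ 2 := by
    rw [← sq_abs (δ + 2 * π * m)]; gcongr; exact h m
  have h2 : 0 < (δ + 2 * π * m) ^ 2 := lt_of_lt_of_le (by positivity) h1
  rw [mul_one_div, div_le_iff₀ h2]
  have h3 : (1 + 2 * δ ^ 2) ≤ (1 + 2 * δ ^ 2) / c ^ 2 * (δ + 2 * π * m) ^ 2 := by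
    rw [div_mul_eq_mul_div, le_div_iff₀ (by positivity)]
    gcongr
  nlinarith [sq_nonneg (2 * δ + 2 * π * m)]

lemma sum_dbar {c F : ℤ → ℝ → ℂ} (hF : Goodq F) (hc : Rapq c)
    (hd : ∀ (m : ℤ) s, HasDerivAt (c m) (2 * π * m * c m s + 2 * F m s) s) (p : ℝ × ℝ) :
    dbar (serq c) p = serq F p := by
  have hg := good_of_ode hF hc hd
  have hr : Rapq (fun m s => 2 * π * m * c m s + 2 * F m s) := by
    have := (hc.mulm.smul (2 * π)).add (hF.rap.smul 2)
    convert this using 3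
    ring
  unfold dbar
  rw [serq_pdS hd hc hr, serq_pdT hd hc hr]
  unfold serq
  have h1 := (hr.summable' p.1 p.2)
  have h2 := (hg.mulT.rap.summable' p.1 p.2)
  rw [smul_eq_mul, ← tsum_mul_left, ← Summable.tsum_add h1 (h2.mul_left _), Complex.real_smul,
    ← tsum_mul_left]
  congr 1
  funext m
  unfold mulT
  have hI := Complex.I_mul_I
  push_cast
  linear_combination (π * m * c m p.1 * exq m p.2) * hI

lemma rap_aux (δ : ℝ) (hδ : 0 < δ) (hδZ : ∀ m : ℤ, δ ≠ 2 * π * m) {F v : ℤ → ℝ → ℂ} (hF : Rapq F)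
    (A : ℤ → ℝ) (E : ℝ) (hA0 : ∀ m, 0 ≤ A m) (hA : ∀ m, A m ≤ E)
    (hv : ∀ m s B, (∀ x, |x - s| ≤ 1 → ‖2 * (((Real.exp (δ * x) : ℝ) : ℂ) * F m x)‖ ≤ B) →
        ‖v m s‖ ≤ B + Real.exp (-|δ + 2 * π * m| / 2) * (1 / |δ + 2 * π * m| + A m)) :
    Rapq (fun m s => ((Real.exp (-δ * s) : ℝ) : ℂ) * v m s) := by
  intro R b
  obtain ⟨C1, hC1⟩ := hF (R + 1) b
  obtain ⟨c, hc, hl⟩ := lam_bound δ hδZ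
  refine ⟨Real.exp (δ * R) * ((2 * (Real.exp (δ * (R + 1)) * |C1|)) + 
    (Nat.factorial b) * Real.exp (δ / 2) * (1 / c + E)), fun m s hs => ?_⟩
  have hE : 0 ≤ E := (hA0 0).trans (hA 0)
  by_cases hm : |(m:ℝ)| ^ b = 0
  · rw [hm, zero_mul]; positivity
  have hm' : 0 < |(m:ℝ)| ^ b := lt_of_le_of_ne (by positivity) (Ne.symm hm)
  have h1 := hv m s (2 * (Real.exp (δ * (R + 1)) * |C1|) / |(m:ℝ)| ^ b) (fun x hx => by
    have hx' : |x| ≤ R + 1 := by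
      have := abs_add_le (x - s) s
      simp only [sub_add_cancel] at this
      linarith
    have h2 := hC1 m x hx'
    rw [le_div_iff₀ hm', norm_mul, norm_mul, Complex.norm_real,
      Real.norm_of_nonneg (Real.exp_pos _).le]
    have h3 : Real.exp (δ * x) ≤ Real.exp (δ * (R + 1)) := by
      gcongr; exact (le_abs_self x).trans hx'
    have h4 : ‖F m x‖ * |(m:ℝ)| ^ b ≤ |C1| := by
      rw [mul_comm]; exact h2.trans (le_abs_self _)
    have h5 := mul_le_mul h3 h4 (by positivity) (by positivity)
    simp only [Complex.norm_ofNat]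
    nlinarith)
  rw [norm_mul, Complex.norm_real, Real.norm_of_nonneg (Real.exp_pos _).le]
  have h6 : Real.exp (-δ * s) ≤ Real.exp (δ * R) := by
    rw [Real.exp_le_exp]
    nlinarith [neg_abs_le s]
  have h7 : |(m:ℝ)| ^ b * Real.exp (-|δ + 2 * π * m| / 2) ≤ (Nat.factorial b) * Real.exp (δ / 2) := by
    have h8 := Real.pow_div_factorial_le_exp |(m:ℝ)| (abs_nonneg _) b
    rw [div_le_iff₀ (by positivity)] at h8
    have h9 : -|δ + 2 * π * m| / 2 ≤ δ / 2 - |(m:ℝ)| := by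
      have := abs_sub_abs_le_abs_sub (2 * π * m) (-δ)
      rw [abs_neg, abs_of_pos hδ, sub_neg_eq_add, abs_mul, abs_of_pos Real.two_pi_pos,
        add_comm (2 * π * (m:ℝ)) δ] at this
      nlinarith [Real.pi_gt_three, abs_nonneg (m:ℝ)]
    calc _ ≤ (Real.exp |(m:ℝ)| * (Nat.factorial b)) * Real.exp (δ / 2 - |(m:ℝ)|) := by gcongr
      _ = (Nat.factorial b) * (Real.exp |(m:ℝ)| * Real.exp (δ / 2 - |(m:ℝ)|)) := by ring
      _ = _ := by rw [← Real.exp_add]; ring_nf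
  calc |(m:ℝ)| ^ b * (Real.exp (-δ * s) * ‖v m s‖) = Real.exp (-δ * s) * (|(m:ℝ)| ^ b * ‖v m s‖) := by
        ring
    _ ≤ Real.exp (δ * R) * (|(m:ℝ)| ^ b * (2 * (Real.exp (δ * (R + 1)) * |C1|) / |(m:ℝ)| ^ b + 
          Real.exp (-|δ + 2 * π * m| / 2) * (1 / |δ + 2 * π * m| + A m))) := by
        gcongr
    _ = Real.exp (δ * R) * ((2 * (Real.exp (δ * (R + 1)) * |C1|)) + 
          (|(m:ℝ)| ^ b * Real.exp (-|δ + 2 * π * m| / 2)) * (1 / |δ + 2 * π * m| + A m)) := by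
        rw [mul_add (|(m:ℝ)| ^ b), mul_div_cancel₀ _ hm]; ring
    _ ≤ _ := by
        have := hl m
        have := hA m
        have := hA0 m
        gcongr

lemma base_exist (δ : ℝ) (hδ : 0 < δ) (hδZ : ∀ m : ℤ, δ ≠ 2 * π * m) :
    ∃ K : ENNReal, K ≠ ⊤ ∧ ∀ f : ℝ × ℝ → ℂ, ContDiff ℝ (⊤ : ℕ∞) f →
      (∀ s t : ℝ, f (s, t + 1) = f (s, t)) → Eq0 δ f ≠ ⊤ →
      ∃ u : ℝ × ℝ → ℂ, ContDiff ℝ (⊤ : ℕ∞) u ∧ (∀ s t : ℝ, u (s, t + 1) = u (s, t)) ∧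
        (∀ p : ℝ × ℝ, dbar u p = f p) ∧ Eq0 δ u ≤ K * Eq0 δ f ∧ Eq0 δ (pdT u) ≤ K * Eq0 δ f := by
  obtain ⟨K, hK, hKb⟩ := lam_bound2 δ hδZ
  refine ⟨ENNReal.ofReal K, ENNReal.ofReal_ne_top, fun f hf hp hE => ?_⟩
  have hl : ∀ m : ℤ, δ + 2 * π * m ≠ 0 := fun m h => hδZ (-m) (by push_cast; linarith)
  have hfc := hf.continuous
  let g : ℤ → ℝ → ℂ := fun m s => 2 * (((Real.exp (δ * s) : ℝ) : ℂ) * cfq f m s)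
  have hgc : ∀ m, Continuous (g m) := fun m => by
    have := cfq_cont hfc m
    simp only [g]; fun_prop
  have hgA : ∀ m, ∫⁻ s, ‖g m s‖ₑ ^ 2 =
      4 * ∫⁻ s, ‖cfq f m s‖ₑ ^ 2 * ENNReal.ofReal (Real.exp (2 * δ * s)) := by
    intro m
    rw [← lintegral_const_mul' _ _ (by simp)]
    refine lintegral_congr fun s => ?_
    simp only [g]
    rw [enorm_mul, mul_pow, wt_mul]
    congr 1
    have : ‖(2:ℂ)‖ₑ = 2 := by
      rw [← ofReal_norm]; simp
    rw [this]; norm_num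
  have hEq := Eq0_eq δ hfc
  have hle : ∀ m, ∫⁻ s, ‖g m s‖ₑ ^ 2 ≤ 4 * Eq0 δ f := fun m => by
    rw [hgA, hEq]; gcongr; exact ENNReal.le_tsum m
  have h4 : 4 * Eq0 δ f ≠ ⊤ := ENNReal.mul_ne_top (by simp) hE
  choose v hv1 hv2 hv3 using fun m : ℤ => ode_ne (δ + 2 * π * m) (hl m) (g m) (hgc m)
    (ne_top_of_le_ne_top h4 (hle m))
  let c : ℤ → ℝ → ℂ := fun m s => ((Real.exp (-δ * s) : ℝ) : ℂ) * v m s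
  have hrap : Rapq c := rap_aux δ hδ hδZ (cfq_rap hf hp) (fun m => (∫⁻ s, ‖g m s‖ₑ ^ 2).toReal)
    (4 * Eq0 δ f).toReal (fun m => ENNReal.toReal_nonneg)
    (fun m => ENNReal.toReal_mono h4 (hle m)) (fun m s B hB => hv3 m s B hB)
  have hcd : ∀ (m : ℤ) s, HasDerivAt (c m) (2 * π * m * c m s + 2 * cfq f m s) s := by
    intro m s
    have hx : HasDerivAt (fun s : ℝ => ((Real.exp (-δ * s) : ℝ) : ℂ))
        ((Real.exp (-δ * s) * -δ : ℝ) : ℂ) s := by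
      have : HasDerivAt (fun s : ℝ => Real.exp (-δ * s)) (Real.exp (-δ * s) * -δ) s := by
        simpa using ((hasDerivAt_id s).const_mul (-δ)).exp
      exact this.ofReal_comp
    refine (hx.mul (hv1 m s)).congr_deriv ?_
    have e : ((Real.exp (-δ * s) : ℝ) : ℂ) * ((Real.exp (δ * s) : ℝ) : ℂ) = 1 := by
      rw [← Complex.ofReal_mul, ← Real.exp_add]; simp
    simp only [c, g]
    push_cast at e ⊢
    linear_combination (2 * cfq f m s) * e
  have hgood := good_of_ode (cfq_good hf hp) hrap hcd
  have hus := serq_contDiff hgood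
  have hw : ∀ m s, ‖c m s‖ₑ ^ 2 * ENNReal.ofReal (Real.exp (2 * δ * s)) = ‖v m s‖ₑ ^ 2 := by
    intro m s
    rw [← wt_mul]
    simp only [c]
    rw [← mul_assoc, ← Complex.ofReal_mul, ← Real.exp_add]
    simp
  have main : ∀ (m : ℤ) (a : ℝ), 0 ≤ a → a ≤ 1 + (2 * π * m) ^ 2 →
      ENNReal.ofReal a * ∫⁻ s, ‖c m s‖ₑ ^ 2 * ENNReal.ofReal (Real.exp (2 * δ * s)) ≤
      ENNReal.ofReal K * ∫⁻ s, ‖cfq f m s‖ₑ ^ 2 * ENNReal.ofReal (Real.exp (2 * δ * s)) := by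
    intro m a ha0 ha
    simp_rw [hw]
    calc _ ≤ ENNReal.ofReal a * (ENNReal.ofReal (1 / (δ + 2 * π * m) ^ 2) * ∫⁻ s, ‖g m s‖ₑ ^ 2) := by
          gcongr; exact hv2 m
      _ = ENNReal.ofReal (4 * a * (1 / (δ + 2 * π * m) ^ 2)) *
          ∫⁻ s, ‖cfq f m s‖ₑ ^ 2 * ENNReal.ofReal (Real.exp (2 * δ * s)) := by
          rw [hgA, ENNReal.ofReal_mul (by positivity), ENNReal.ofReal_mul (by norm_num)]
          simp only [ENNReal.ofReal_ofNat]
          ring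
      _ ≤ _ := by
          gcongr
          refine le_trans ?_ (hKb m)
          gcongr
  refine ⟨serq c, hus, serq_per c, fun p => ?_, ?_, ?_⟩
  · rw [sum_dbar (cfq_good hf hp) hrap hcd]
    exact (cfq_inv hfc hp p.1 ((cfq_rap hf hp).summable p.1) p.2).tsum_eq
  · rw [Eq0_eq δ hus.continuous, hEq, ← ENNReal.tsum_mul_left]
    refine ENNReal.tsum_le_tsum fun m => ?_
    simp_rw [cfq_serq hrap]
    have := main m 1 zero_le_one (by nlinarith [sq_nonneg (2 * π * (m:ℝ))])
    simpa using this
  · rw [Eq0_eq δ (pdT_smooth hus).continuous, hEq, ← ENNReal.tsum_mul_left]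
    refine ENNReal.tsum_le_tsum fun m => ?_
    simp_rw [cfq_pdT (smooth_one hus) (serq_per c), cfq_serq hrap]
    refine le_trans (le_of_eq ?_) (main m ((2 * π * m) ^ 2) (by positivity) (by linarith))
    rw [← lintegral_const_mul' _ _ (by simp)]
    refine lintegral_congr fun s => ?_
    rw [enorm_mul, mul_pow, mul_assoc]
    congr 1
    rw [← ofReal_norm, ← ENNReal.ofReal_pow (norm_nonneg _)]
    congr 1
    simp [abs_of_pos Real.pi_pos, mul_pow]

lemma exp_not_int (a : ℝ) : ∫⁻ s : ℝ, ENNReal.ofReal (Real.exp (a * s)) = ⊤ := by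
  rcases le_total 0 a with h | h
  · refine top_unique ?_
    calc ⊤ = ∫⁻ s in Ici (0:ℝ), 1 := by simp
      _ ≤ ∫⁻ s in Ici (0:ℝ), ENNReal.ofReal (Real.exp (a * s)) := by
        refine setLIntegral_mono (by fun_prop) fun s hs => ?_
        rw [ENNReal.one_le_ofReal, Real.one_le_exp_iff]
        exact mul_nonneg h hs
      _ ≤ _ := setLIntegral_le_lintegral _ _
  · refine top_unique ?_
    calc ⊤ = ∫⁻ s in Iic (0:ℝ), 1 := by simp
      _ ≤ ∫⁻ s in Iic (0:ℝ), ENNReal.ofReal (Real.exp (a * s)) := by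
        refine setLIntegral_mono (by fun_prop) fun s hs => ?_
        rw [ENNReal.one_le_ofReal, Real.one_le_exp_iff]
        exact mul_nonneg_of_nonpos_of_nonpos h hs
      _ ≤ _ := setLIntegral_le_lintegral _ _

lemma uniq_zero (δ : ℝ) {h : ℝ × ℝ → ℂ} (hh : ContDiff ℝ 1 h)
    (hp : ∀ s t : ℝ, h (s, t + 1) = h (s, t)) (hd : ∀ p, dbar h p = 0) (hE : Eq0 δ h ≠ ⊤) :
    h = 0 := by
  have hder : ∀ m s, HasDerivAt (cfq h m) (2 * π * m * cfq h m s) s := by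
    intro m s
    refine (cfq_deriv hh m s).congr_deriv ?_
    have e : ∀ p, pdS h p = -Complex.I * pdT h p := by
      intro p
      have := hd p
      unfold dbar at this
      rw [smul_eq_zero] at this
      have := this.resolve_left (by norm_num)
      rw [smul_eq_mul] at this
      linear_combination this
    have : cfq (pdS h) m s = -Complex.I * cfq (pdT h) m s := by
      unfold cfq
      rw [← intervalIntegral.integral_const_mul]
      refine intervalIntegral.integral_congr fun t _ => ?_
      simp only [e]; ring
    rw [this, cfq_pdT hh hp]
    have hI := Complex.I_mul_I
    linear_combination (-2 * π * m * cfq h m s) * hI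
  have hform : ∀ m s, cfq h m s = ((Real.exp (2 * π * m * s) : ℝ) : ℂ) * cfq h m 0 := by
    intro m s
    have hx : ∀ s, HasDerivAt (fun s : ℝ => ((Real.exp (-(2 * π * m) * s) : ℝ) : ℂ))
        ((Real.exp (-(2 * π * m) * s) * -(2 * π * m) : ℝ) : ℂ) s := by
      intro s
      have : HasDerivAt (fun s : ℝ => Real.exp (-(2 * π * m) * s))
          (Real.exp (-(2 * π * m) * s) * -(2 * π * m)) s := by
        simpa using ((hasDerivAt_id s).const_mul (-(2 * π * (m:ℝ)))).exp
      exact this.ofReal_comp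
    have hz : ∀ s, HasDerivAt
        (fun s : ℝ => ((Real.exp (-(2 * π * m) * s) : ℝ) : ℂ) * cfq h m s) 0 s := by
      intro s
      refine ((hx s).mul (hder m s)).congr_deriv ?_
      push_cast; ring
    have := is_const_of_deriv_eq_zero (fun s => (hz s).differentiableAt) (fun s => (hz s).deriv) s 0
    simp only [mul_zero, Real.exp_zero, Complex.ofReal_one, one_mul] at this
    rw [← this, ← mul_assoc, ← Complex.ofReal_mul, ← Real.exp_add]
    simp
  have hzero : ∀ m, cfq h m 0 = 0 := by
    intro m
    by_contra hne
    have h1 : ∫⁻ s, ‖cfq h m s‖ₑ ^ 2 * ENNReal.ofReal (Real.exp (2 * δ * s)) ≠ ⊤ := by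
      refine ne_top_of_le_ne_top hE ?_
      rw [Eq0_eq δ hh.continuous]
      exact ENNReal.le_tsum m
    apply h1
    have e : ∀ s, ‖cfq h m s‖ₑ ^ 2 * ENNReal.ofReal (Real.exp (2 * δ * s)) =
        ‖cfq h m 0‖ₑ ^ 2 * ENNReal.ofReal (Real.exp ((2 * (2 * π * m) + 2 * δ) * s)) := by
      intro s
      rw [hform m s, wt_mul, mul_assoc, ← ENNReal.ofReal_mul (Real.exp_pos _).le, ← Real.exp_add]
      ring_nf
    simp_rw [e]
    rw [lintegral_const_mul' _ _ (by simp), exp_not_int, ENNReal.mul_top]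
    simpa using hne
  funext p
  have hz : ∀ m s, cfq h m s = 0 := fun m s => by rw [hform, hzero, mul_zero]
  have := cfq_inv hh.continuous hp p.1 (by simp [hz, summable_zero]) p.2
  simp only [hz, zero_mul] at this
  exact (this.unique hasSum_zero)

def Ejq (δ : ℝ) (j : ℕ) (h : ℝ × ℝ → ℂ) : ENNReal :=
  ∫⁻ p in (univ : Set ℝ) ×ˢ Icc (0:ℝ) 1,
    ‖iteratedFDeriv ℝ j h p‖ₑ ^ 2 * ENNReal.ofReal (Real.exp (2 * δ * p.1))

def Qq (δ : ℝ) (k : ℕ) (h : ℝ × ℝ → ℂ) : ENNReal := ∑ j ∈ Finset.range (k + 1), Ejq δ j h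

lemma Ejq_zero (δ : ℝ) (h : ℝ × ℝ → ℂ) : Ejq δ 0 h = Eq0 δ h := by
  unfold Ejq Eq0
  refine lintegral_congr fun p => ?_
  rw [← ofReal_norm, norm_iteratedFDeriv_zero, ofReal_norm]

lemma norm_app (v : ℝ × ℝ) (hv : ‖v‖ ≤ 1) {h : ℝ × ℝ → ℂ} (hh : ContDiff ℝ (⊤ : ℕ∞) h) (j : ℕ)
    (p : ℝ × ℝ) : ‖iteratedFDeriv ℝ j (fun p => fderiv ℝ h p v) p‖ ≤ ‖iteratedFDeriv ℝ (j + 1) h p‖ := by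
  have h1 : ContDiff ℝ (⊤ : ℕ∞) (fderiv ℝ h) := hh.fderiv_right (m := (⊤ : ℕ∞)) (by simp)
  have := norm_iteratedFDeriv_clm_apply_const (𝕜 := ℝ) (f := fderiv ℝ h) (c := v) (x := p)
    (N := (⊤ : ℕ∞)) (n := j) h1.contDiffAt (by exact_mod_cast le_top)
  rw [norm_iteratedFDeriv_fderiv] at this
  refine this.trans ?_
  have := mul_le_mul_of_nonneg_right hv (norm_nonneg (iteratedFDeriv ℝ (j+1) h p))
  simpa using this

lemma norm_pdT {h : ℝ × ℝ → ℂ} (hh : ContDiff ℝ (⊤ : ℕ∞) h) (j : ℕ)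
    (p : ℝ × ℝ) : ‖iteratedFDeriv ℝ j (pdT h) p‖ ≤ ‖iteratedFDeriv ℝ (j + 1) h p‖ :=
  norm_app (0, 1) (by simp [Prod.norm_def]) hh j p

lemma norm_succ {h : ℝ × ℝ → ℂ} (hh : ContDiff ℝ (⊤ : ℕ∞) h) (j : ℕ) (p : ℝ × ℝ) :
    ‖iteratedFDeriv ℝ (j + 1) h p‖ ≤
      ‖iteratedFDeriv ℝ j (pdS h) p‖ + ‖iteratedFDeriv ℝ j (pdT h) p‖ := by
  have hj : ((j : ℕ) : WithTop ℕ∞) ≤ ((⊤ : ℕ∞) : WithTop ℕ∞) := by exact_mod_cast le_top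
  let L1 : ℂ →L[ℝ] (ℝ × ℝ →L[ℝ] ℂ) :=
    ContinuousLinearMap.smulRightL ℝ (ℝ × ℝ) ℂ (ContinuousLinearMap.fst ℝ ℝ ℝ)
  let L2 : ℂ →L[ℝ] (ℝ × ℝ →L[ℝ] ℂ) :=
    ContinuousLinearMap.smulRightL ℝ (ℝ × ℝ) ℂ (ContinuousLinearMap.snd ℝ ℝ ℝ)
  have a1 : ∀ z q, L1 z q = q.1 • z := fun z q => rfl
  have a2 : ∀ z q, L2 z q = q.2 • z := fun z q => rfl
  have n1 : ‖L1‖ ≤ 1 := ContinuousLinearMap.opNorm_le_bound _ zero_le_one fun z =>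
    ContinuousLinearMap.opNorm_le_bound _ (by positivity) fun q => by
      rw [a1, norm_smul, one_mul, mul_comm]; gcongr; exact norm_fst_le q
  have n2 : ‖L2‖ ≤ 1 := ContinuousLinearMap.opNorm_le_bound _ zero_le_one fun z =>
    ContinuousLinearMap.opNorm_le_bound _ (by positivity) fun q => by
      rw [a2, norm_smul, one_mul, mul_comm]; gcongr; exact norm_snd_le q
  have e : fderiv ℝ h = (L1 ∘ pdS h) + (L2 ∘ pdT h) := by
    funext p
    refine ContinuousLinearMap.ext fun q => ?_
    simp only [Pi.add_apply, ContinuousLinearMap.add_apply, Function.comp_apply]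
    rw [a1, a2]
    unfold pdS pdT
    rw [← map_smul, ← map_smul, ← map_add]
    congr 1
    ext <;> simp
  have c1 : ContDiff ℝ (⊤ : ℕ∞) (L1 ∘ pdS h) := L1.contDiff.comp (pdS_smooth hh)
  have c2 : ContDiff ℝ (⊤ : ℕ∞) (L2 ∘ pdT h) := L2.contDiff.comp (pdT_smooth hh)
  rw [← norm_iteratedFDeriv_fderiv, e, iteratedFDeriv_add (c1.of_le hj) (c2.of_le hj)]
  refine (norm_add_le _ _).trans ?_
  have b1 := L1.norm_iteratedFDeriv_comp_left (x := p) (pdS_smooth hh).contDiffAt hj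
  have b2 := L2.norm_iteratedFDeriv_comp_left (x := p) (pdT_smooth hh).contDiffAt hj
  have := mul_le_mul_of_nonneg_right n1 (norm_nonneg (iteratedFDeriv ℝ j (pdS h) p))
  have := mul_le_mul_of_nonneg_right n2 (norm_nonneg (iteratedFDeriv ℝ j (pdT h) p))
  linarith

lemma pdS_of_dbar {f u : ℝ × ℝ → ℂ} (hd : ∀ p, dbar u p = f p) (p : ℝ × ℝ) :
    pdS u p = 2 * f p - Complex.I * pdT u p := by
  have := hd p
  unfold dbar at this
  rw [Complex.real_smul, smul_eq_mul] at this
  push_cast at this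
  linear_combination 2 * this

lemma norm_step {f u : ℝ × ℝ → ℂ} (hf : ContDiff ℝ (⊤ : ℕ∞) f) (hu : ContDiff ℝ (⊤ : ℕ∞) u)
    (hd : ∀ p, dbar u p = f p) (j : ℕ) (p : ℝ × ℝ) :
    ‖iteratedFDeriv ℝ (j + 1) u p‖ ^ 2 ≤
      8 * (‖iteratedFDeriv ℝ j f p‖ ^ 2 + ‖iteratedFDeriv ℝ j (pdT u) p‖ ^ 2) := by
  have hj : ((j : ℕ) : WithTop ℕ∞) ≤ ((⊤ : ℕ∞) : WithTop ℕ∞) := by exact_mod_cast le_top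
  have e : pdS u = (2:ℂ) • f + (-Complex.I) • pdT u := by
    funext p; rw [pdS_of_dbar hd p]; simp; ring
  have h1 := norm_succ hu j p
  have h2 : ‖iteratedFDeriv ℝ j (pdS u) p‖ ≤
      2 * ‖iteratedFDeriv ℝ j f p‖ + ‖iteratedFDeriv ℝ j (pdT u) p‖ := by
    have cf := (hf.of_le hj)
    have cu := ((pdT_smooth hu).of_le hj)
    have c1 : ContDiff ℝ j ((2:ℂ) • f) := cf.const_smul (2:ℂ)
    have c2 : ContDiff ℝ j ((-Complex.I) • pdT u) := cu.const_smul (-Complex.I)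
    rw [e, iteratedFDeriv_add c1 c2]
    refine (norm_add_le _ _).trans ?_
    rw [iteratedFDeriv_const_smul_apply cf.contDiffAt,
      iteratedFDeriv_const_smul_apply cu.contDiffAt, norm_smul, norm_smul]
    simp
  have a0 := norm_nonneg (iteratedFDeriv ℝ (j+1) u p)
  set a := ‖iteratedFDeriv ℝ j f p‖
  set b := ‖iteratedFDeriv ℝ j (pdT u) p‖
  have h3 : ‖iteratedFDeriv ℝ (j + 1) u p‖ ≤ 2 * (a + b) := by linarith
  have h4 := pow_le_pow_left₀ a0 h3 2
  nlinarith [sq_nonneg (a - b)]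

lemma enorm_sq {E : Type*} [SeminormedAddCommGroup E] (z : E) :
    ‖z‖ₑ ^ 2 = ENNReal.ofReal (‖z‖ ^ 2) := by
  rw [ENNReal.ofReal_pow (norm_nonneg _), ofReal_norm]

lemma Ejq_pdT (δ : ℝ) {h : ℝ × ℝ → ℂ} (hh : ContDiff ℝ (⊤ : ℕ∞) h) (j : ℕ) :
    Ejq δ j (pdT h) ≤ Ejq δ (j + 1) h := by
  unfold Ejq
  refine lintegral_mono fun p => ?_
  simp only [enorm_sq]
  gcongr
  exact norm_pdT hh j p

lemma Ejq_step (δ : ℝ) {f u : ℝ × ℝ → ℂ} (hf : ContDiff ℝ (⊤ : ℕ∞) f) (hu : ContDiff ℝ (⊤ : ℕ∞) u)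
    (hd : ∀ p, dbar u p = f p) (j : ℕ) :
    Ejq δ (j + 1) u ≤ 8 * (Ejq δ j f + Ejq δ j (pdT u)) := by
  unfold Ejq
  have hj : ((j : ℕ) : WithTop ℕ∞) ≤ ((⊤ : ℕ∞) : WithTop ℕ∞) := by exact_mod_cast le_top
  have c1 := (hf.continuous_iteratedFDeriv hj)
  have m1 : Measurable fun p => ‖iteratedFDeriv ℝ j f p‖ₑ := c1.enorm.measurable
  rw [← lintegral_add_left (by fun_prop), ← lintegral_const_mul' _ _ (by simp)]
  refine lintegral_mono fun p => ?_
  simp only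
  rw [← add_mul, ← mul_assoc]
  gcongr
  simp only [enorm_sq]
  rw [← ENNReal.ofReal_add (by positivity) (by positivity),
    show (8:ENNReal) = ENNReal.ofReal 8 by simp, ← ENNReal.ofReal_mul (by norm_num)]
  exact ENNReal.ofReal_le_ofReal (norm_step hf hu hd j p)

lemma dbar_pdT {f u : ℝ × ℝ → ℂ} (hu : ContDiff ℝ (⊤ : ℕ∞) u)
    (hd : ∀ p, dbar u p = f p) (p : ℝ × ℝ) : dbar (pdT u) p = pdT f p := by
  have hdu : Differentiable ℝ (fderiv ℝ u) :=
    (hu.fderiv_right (m := (⊤ : ℕ∞)) (by simp)).differentiable (by simp)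
  have sym : ∀ p v w, fderiv ℝ (fderiv ℝ u) p v w = fderiv ℝ (fderiv ℝ u) p w v := by
    intro p v w
    have := (hu.contDiffAt (x := p)).isSymmSndFDerivAt
      (by simp only [minSmoothness_of_isRCLikeNormedField]; exact WithTop.coe_le_coe.2 (le_top (a := (2:ℕ∞))))
    exact this v w
  have ap : ∀ p v w, fderiv ℝ (fun p => fderiv ℝ u p v) p w = fderiv ℝ (fderiv ℝ u) p w v := by
    intro p v w
    rw [fderiv_clm_apply (hdu p) (differentiableAt_const v)]
    simp
  have e : f = (2⁻¹ : ℝ) • (pdS u + Complex.I • pdT u) := by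
    funext p; rw [← hd p]; rfl
  have dS : DifferentiableAt ℝ (pdS u) p := (pdS_smooth hu).differentiable (by simp) p
  have dT : DifferentiableAt ℝ (pdT u) p := (pdT_smooth hu).differentiable (by simp) p
  have hT : ∀ v, fderiv ℝ (pdT u) p v = fderiv ℝ (fderiv ℝ u) p v (0, 1) := fun v => ap p (0,1) v
  have hS : ∀ v, fderiv ℝ (pdS u) p v = fderiv ℝ (fderiv ℝ u) p v (1, 0) := fun v => ap p (1,0) v
  have key : pdT f p = (2⁻¹ : ℝ) • (fderiv ℝ (pdS u) p (0, 1) + 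
      Complex.I • fderiv ℝ (pdT u) p (0, 1)) := by
    unfold pdT at *
    have hh := ((dS.hasFDerivAt.add (dT.hasFDerivAt.const_smul Complex.I)).const_smul (2⁻¹ : ℝ))
    rw [e, hh.fderiv]
    simp
  rw [key, hS, sym]
  unfold dbar
  rw [← hT]
  rfl

lemma Qq_mono (δ : ℝ) (h : ℝ × ℝ → ℂ) {j k : ℕ} (hjk : j ≤ k) : Ejq δ j h ≤ Qq δ k h := by
  unfold Qq
  exact Finset.single_le_sum (f := fun j => Ejq δ j h) (fun _ _ => zero_le)
    (Finset.mem_range.2 (by omega))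

lemma Qq_mono' (δ : ℝ) (h : ℝ × ℝ → ℂ) {j k : ℕ} (hjk : j ≤ k) : Qq δ j h ≤ Qq δ k h := by
  unfold Qq
  exact Finset.sum_le_sum_of_subset (Finset.range_mono (by omega))

lemma Qq_pdT (δ : ℝ) {h : ℝ × ℝ → ℂ} (hh : ContDiff ℝ (⊤ : ℕ∞) h) (k : ℕ) :
    Qq δ k (pdT h) ≤ Qq δ (k + 1) h := by
  unfold Qq
  rw [Finset.sum_range_succ' _ (k + 1)]
  refine le_trans ?_ le_self_add
  exact Finset.sum_le_sum fun j _ => Ejq_pdT δ hh j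

lemma Eq0_sub (δ : ℝ) {u v : ℝ × ℝ → ℂ} (hu : Continuous u) (h1 : Eq0 δ u ≠ ⊤)
    (h2 : Eq0 δ v ≠ ⊤) : Eq0 δ (u - v) ≠ ⊤ := by
  refine ne_top_of_le_ne_top (b := 2 * (Eq0 δ u + Eq0 δ v))
    (ENNReal.mul_ne_top (by simp) (ENNReal.add_ne_top.2 ⟨h1, h2⟩)) ?_
  unfold Eq0
  have m1 := hu.measurable
  rw [← lintegral_add_left (by fun_prop), ← lintegral_const_mul' _ _ (by simp)]
  refine lintegral_mono fun p => ?_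
  simp only
  rw [← add_mul, ← mul_assoc]
  gcongr
  simp only [enorm_sq]
  rw [← ENNReal.ofReal_add (by positivity) (by positivity),
    show (2:ENNReal) = ENNReal.ofReal 2 by simp, ← ENNReal.ofReal_mul (by norm_num)]
  refine ENNReal.ofReal_le_ofReal ?_
  have := pow_le_pow_left₀ (norm_nonneg _) (norm_sub_le (u p) (v p)) 2
  simp only [Pi.sub_apply]
  nlinarith [sq_nonneg (‖u p‖ - ‖v p‖)]

lemma uniq_main (δ : ℝ) {u v : ℝ × ℝ → ℂ} (hu : ContDiff ℝ 1 u) (hv : ContDiff ℝ 1 v)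
    (pu : ∀ s t : ℝ, u (s, t + 1) = u (s, t)) (pv : ∀ s t : ℝ, v (s, t + 1) = v (s, t))
    (hd : ∀ p, dbar u p = dbar v p) (h1 : Eq0 δ u ≠ ⊤) (h2 : Eq0 δ v ≠ ⊤) : u = v := by
  have := uniq_zero δ (hu.sub hv) (fun s t => by simp [pu, pv]) (fun p => ?_)
    (Eq0_sub δ hu.continuous h1 h2)
  · exact sub_eq_zero.1 this
  · have := hd p
    unfold dbar pdS pdT at *
    rw [fderiv_fun_sub (hu.differentiable (by simp) p) (hv.differentiable (by simp) p)]
    simp only [sub_apply]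
    rw [Complex.real_smul, Complex.real_smul] at this
    rw [Complex.real_smul]
    simp only [smul_eq_mul] at *
    linear_combination this

lemma higher (δ : ℝ) (hδ : 0 < δ) (hδZ : ∀ m : ℤ, δ ≠ 2 * π * m) (k : ℕ) :
    ∃ K : ENNReal, K ≠ ⊤ ∧ ∀ f u : ℝ × ℝ → ℂ, ContDiff ℝ (⊤ : ℕ∞) f →
      (∀ s t : ℝ, f (s, t + 1) = f (s, t)) → ContDiff ℝ (⊤ : ℕ∞) u →
      (∀ s t : ℝ, u (s, t + 1) = u (s, t)) → (∀ p, dbar u p = f p) → Eq0 δ u ≠ ⊤ →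
      Qq δ k f ≠ ⊤ → ∀ j ≤ k + 1, Ejq δ j u ≤ K * Qq δ k f := by
  induction k with
  | zero =>
    obtain ⟨K, hK, h⟩ := base_exist δ hδ hδZ
    refine ⟨K + 8 * (1 + K), ?_, fun f u hf pf hu pu hd hE hQ j hj => ?_⟩
    · exact ENNReal.add_ne_top.2 ⟨hK, ENNReal.mul_ne_top (by simp)
        (ENNReal.add_ne_top.2 ⟨by simp, hK⟩)⟩
    have eQ : Qq δ 0 f = Eq0 δ f := by simp [Qq, Ejq_zero]
    rw [eQ] at hQ ⊢
    obtain ⟨u', hu', pu', hd', h1, h2⟩ := h f hf pf hQ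
    have : u' = u := uniq_main δ (smooth_one hu') (smooth_one hu) pu' pu
      (fun p => by rw [hd, hd']) (ne_top_of_le_ne_top (ENNReal.mul_ne_top hK hQ) h1) hE
    subst this
    rcases Nat.le_one_iff_eq_zero_or_eq_one.1 hj with rfl | rfl
    · rw [Ejq_zero]
      refine h1.trans ?_
      gcongr
      exact le_self_add
    · refine (Ejq_step δ hf hu hd 0).trans ?_
      rw [Ejq_zero, Ejq_zero, add_mul, mul_assoc, add_mul, one_mul]
      refine le_trans ?_ le_add_self
      gcongr
  | succ k ih =>
    obtain ⟨K, hK, h⟩ := ih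
    refine ⟨K + 8 * (1 + K), ?_, fun f u hf pf hu pu hd hE hQ j hj => ?_⟩
    · exact ENNReal.add_ne_top.2 ⟨hK, ENNReal.mul_ne_top (by simp)
        (ENNReal.add_ne_top.2 ⟨by simp, hK⟩)⟩
    have hQk : Qq δ k f ≠ ⊤ := ne_top_of_le_ne_top hQ (Qq_mono' δ f (by omega))
    have h0 := h f u hf pf hu pu hd hE hQk
    rcases Nat.lt_or_ge j (k + 2) with hj' | hj'
    · refine (h0 j (by omega)).trans ?_
      gcongr
      · exact le_self_add
      · exact Qq_mono' δ f (by omega)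
    · have : j = (k + 1) + 1 := by omega
      subst this
      have hT0 : Eq0 δ (pdT u) ≠ ⊤ := by
        rw [← Ejq_zero]
        refine ne_top_of_le_ne_top (ENNReal.mul_ne_top hK hQk)
          ((Ejq_pdT δ hu 0).trans (h0 1 (by omega)))
      have hQT := Qq_pdT δ hf k
      have h3 := h (pdT f) (pdT u) (pdT_smooth hf) (pdT_per pf) (pdT_smooth hu) (pdT_per pu)
        (dbar_pdT hu hd) hT0 (ne_top_of_le_ne_top hQ hQT) (k + 1) le_rfl
      refine (Ejq_step δ hf hu hd (k + 1)).trans ?_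
      rw [add_mul, mul_assoc, add_mul, one_mul]
      refine le_trans ?_ le_add_self
      gcongr
      · exact Qq_mono δ f le_rfl
      · refine h3.trans ?_
        gcongr

lemma Qq_eq (δ : ℝ) (k : ℕ) {h : ℝ × ℝ → ℂ} (hh : ContDiff ℝ (⊤ : ℕ∞) h) :
    Qq δ k h = ∫⁻ p in (univ : Set ℝ) ×ˢ Icc (0:ℝ) 1, ENNReal.ofReal
      ((∑ j ∈ Finset.range (k + 1), ‖iteratedFDeriv ℝ j h p‖ ^ 2) * Real.exp (2 * δ * p.1)) := by
  unfold Qq Ejq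
  rw [← lintegral_finsetSum]
  · refine lintegral_congr fun p => ?_
    rw [ENNReal.ofReal_mul (by positivity), ENNReal.ofReal_sum_of_nonneg (fun _ _ => by positivity),
      Finset.sum_mul]
    simp only [enorm_sq]
  · intro j _
    have c1 := (hh.continuous_iteratedFDeriv (m := j) (by exact_mod_cast le_top))
    have m1 : Measurable fun p => ‖iteratedFDeriv ℝ j h p‖ₑ := c1.enorm.measurable
    fun_prop

lemma dens_cont (δ : ℝ) (k : ℕ) {h : ℝ × ℝ → ℂ} (hh : ContDiff ℝ (⊤ : ℕ∞) h) :
    Continuous fun p : ℝ × ℝ => (∑ j ∈ Finset.range (k + 1), ‖iteratedFDeriv ℝ j h p‖ ^ 2) *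
      Real.exp (2 * δ * p.1) := by
  refine Continuous.mul (continuous_finsetSum _ fun j _ => ?_) (by fun_prop)
  exact (hh.continuous_iteratedFDeriv (m := j) (by exact_mod_cast le_top)).norm.pow 2

lemma Qq_int (δ : ℝ) (k : ℕ) {h : ℝ × ℝ → ℂ} (hh : ContDiff ℝ (⊤ : ℕ∞) h) :
    IntegrableOn (fun p : ℝ × ℝ => (∑ j ∈ Finset.range (k + 1), ‖iteratedFDeriv ℝ j h p‖ ^ 2) *
      Real.exp (2 * δ * p.1)) ((univ : Set ℝ) ×ˢ Icc (0:ℝ) 1) ↔ Qq δ k h ≠ ⊤ := by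
  rw [Qq_eq δ k hh, ← lt_top_iff_ne_top]
  unfold IntegrableOn Integrable
  rw [hasFiniteIntegral_iff_ofReal (Eventually.of_forall fun p => by positivity)]
  exact and_iff_right (dens_cont δ k hh).aestronglyMeasurable

lemma wN_eq (δ : ℝ) (k : ℕ) {h : ℝ × ℝ → ℂ} (hh : ContDiff ℝ (⊤ : ℕ∞) h) :
    wN k δ h = Real.sqrt (Qq δ k h).toReal := by
  unfold wN
  rw [Qq_eq δ k hh, integral_eq_lintegral_of_nonneg_ae (Eventually.of_forall fun p => by positivity)
    (dens_cont δ k hh).aestronglyMeasurable]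

lemma Eq0_int (δ : ℝ) {h : ℝ × ℝ → ℂ} 
    (hi : IntegrableOn (fun p : ℝ × ℝ => ‖h p‖ ^ 2 * Real.exp (2 * δ * p.1))
        ((univ : Set ℝ) ×ˢ Icc (0:ℝ) 1)) : Eq0 δ h ≠ ⊤ := by
  have := hi.2
  rw [hasFiniteIntegral_iff_ofReal (Eventually.of_forall fun p => by positivity)] at this
  unfold Eq0
  simp_rw [enorm_sq]
  simp_rw [ENNReal.ofReal_mul (sq_nonneg _)] at this
  exact this.ne

theorem stmt_11 (k : ℕ) (δ : ℝ) (hδ : 0 < δ) (hδZ : ∀ m : ℤ, δ ≠ 2 * π * m) :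
    -- existence with estimate
    (∃ C > 0, ∀ f : ℝ × ℝ → ℂ, ContDiff ℝ (⊤ : ℕ∞) f → (∀ s t : ℝ, f (s, t + 1) = f (s, t)) →
      IntegrableOn
        (fun p : ℝ × ℝ =>
          (∑ j ∈ Finset.range (k + 1), ‖iteratedFDeriv ℝ j f p‖ ^ 2) * Real.exp (2 * δ * p.1))
        ((univ : Set ℝ) ×ˢ Icc (0:ℝ) 1) →
      ∃ u : ℝ × ℝ → ℂ, ContDiff ℝ (⊤ : ℕ∞) u ∧ (∀ s t : ℝ, u (s, t + 1) = u (s, t)) ∧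
        (∀ p : ℝ × ℝ, dbar u p = f p) ∧
        IntegrableOn
          (fun p : ℝ × ℝ =>
            (∑ j ∈ Finset.range (k + 2), ‖iteratedFDeriv ℝ j u p‖ ^ 2) * Real.exp (2 * δ * p.1))
          ((univ : Set ℝ) ×ˢ Icc (0:ℝ) 1) ∧
        wN (k + 1) δ u ≤ C * wN k δ f) ∧
    -- uniqueness
    (∀ u₁ u₂ : ℝ × ℝ → ℂ, ContDiff ℝ 1 u₁ → ContDiff ℝ 1 u₂ →
      (∀ s t : ℝ, u₁ (s, t + 1) = u₁ (s, t)) → (∀ s t : ℝ, u₂ (s, t + 1) = u₂ (s, t)) →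
      (∀ p : ℝ × ℝ, dbar u₁ p = dbar u₂ p) →
      IntegrableOn (fun p : ℝ × ℝ => ‖u₁ p‖ ^ 2 * Real.exp (2 * δ * p.1))
        ((univ : Set ℝ) ×ˢ Icc (0:ℝ) 1) →
      IntegrableOn (fun p : ℝ × ℝ => ‖u₂ p‖ ^ 2 * Real.exp (2 * δ * p.1))
        ((univ : Set ℝ) ×ˢ Icc (0:ℝ) 1) →
      u₁ = u₂) := by
  refine ⟨?_, ?_⟩
  · obtain ⟨K0, hK0, h0⟩ := base_exist δ hδ hδZ
    obtain ⟨K, hK, h⟩ := higher δ hδ hδZ k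
    refine ⟨Real.sqrt (((k + 2 : ℕ) : ENNReal) * K).toReal + 1, by positivity, fun f hf pf hi => ?_⟩
    have hQ := (Qq_int δ k hf).1 hi
    have hE : Eq0 δ f ≠ ⊤ := by
      rw [← Ejq_zero]; exact ne_top_of_le_ne_top hQ (Qq_mono δ f (Nat.zero_le k))
    obtain ⟨u, hu, pu, hd, h1, -⟩ := h0 f hf pf hE
    have hEu : Eq0 δ u ≠ ⊤ := ne_top_of_le_ne_top (ENNReal.mul_ne_top hK0 hE) h1
    have hj := h f u hf pf hu pu hd hEu hQ
    have hS : Qq δ (k + 1) u ≤ (((k + 2 : ℕ) : ENNReal) * K) * Qq δ k f := by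
      unfold Qq at hj ⊢
      refine (Finset.sum_le_card_nsmul _ _ _ (fun j hj' => hj j (by
        have := Finset.mem_range.1 hj'; omega))).trans ?_
      rw [Finset.card_range, nsmul_eq_mul, mul_assoc]
    have hk2 : ((k + 2 : ℕ) : ENNReal) * K ≠ ⊤ := ENNReal.mul_ne_top (ENNReal.natCast_ne_top _) hK
    refine ⟨u, hu, pu, hd, (Qq_int δ (k + 1) hu).2 (ne_top_of_le_ne_top
      (ENNReal.mul_ne_top hk2 hQ) hS), ?_⟩
    rw [wN_eq δ (k + 1) hu, wN_eq δ k hf]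
    have h2 := ENNReal.toReal_mono (ENNReal.mul_ne_top hk2 hQ) hS
    rw [ENNReal.toReal_mul] at h2
    refine (Real.sqrt_le_sqrt h2).trans ?_
    rw [Real.sqrt_mul ENNReal.toReal_nonneg]
    have := Real.sqrt_nonneg (Qq δ k f).toReal
    nlinarith
  · intro u₁ u₂ hu₁ hu₂ p₁ p₂ hd h1 h2
    exact uniq_main δ hu₁ hu₂ p₁ p₂ hd (Eq0_int δ h1) (Eq0_int δ h2)
end
end

section
/- Let n ≥ 1 and let J₀ and J be real 2n×2n matrices such that J₀² = −Id, J² = −Id, J₀ᵀ = −J₀, and A := −J₀·J is symmetric and positive definite. Let A^{1/2} denote the unique symmetric positive definite square root of A and set U := (A^{1/2})^{−1}. Then U is symmetric positive definite and U^{−1}·J·U = J₀. (Paper's Lemma 7.1, algebraic part, following Hofer–Wysocki–Zehnder: the normalized square root of −J₀J conjugates a compatible complex structure J to the reference complex structure J₀.) -/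
open Matrix

noncomputable section

open scoped MatrixOrder in
theorem sqrt_uniq_aux {m : Type} [Fintype m] [DecidableEq m] (C D : Matrix m m ℝ)
    (hC : C.PosSemidef) (hD : D.PosSemidef) (h : C * C = D * D) : C = D := by
  have h1 := CFC.sqrt_mul_self C hC.nonneg
  have h2 := CFC.sqrt_mul_self D hD.nonneg
  rw [← h1, ← h2, h]

theorem stmt_12 (n : ℕ) (hn : 1 ≤ n)
    (J₀ J B : Matrix (Fin (2 * n)) (Fin (2 * n)) ℝ)
    (hJ₀sq : J₀ * J₀ = -1) (hJsq : J * J = -1) (hJ₀t : J₀ᵀ = -J₀)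
    (hA : (-(J₀ * J)).PosDef)
    -- B is the unique symmetric positive definite square root of A = −J₀·J,
    -- and U := B⁻¹
    (hBpos : B.PosDef) (hBsq : B * B = -(J₀ * J)) :
    (B⁻¹).PosDef ∧ B * J * B⁻¹ = J₀ := by
  refine ⟨hBpos.inv, ?_⟩
  have hdet : IsUnit B.det := (Matrix.isUnit_iff_isUnit_det B).mp hBpos.isUnit
  have hBi : B * B⁻¹ = 1 := Matrix.mul_nonsing_inv B hdet
  have hiB : B⁻¹ * B = 1 := Matrix.nonsing_inv_mul B hdet
  have hJ : J = J₀ * (B * B) := by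
    rw [hBsq, mul_neg, ← mul_assoc, hJ₀sq]; simp
  have hC : (-(J₀ * B * J₀)).PosSemidef := by
    have := hBpos.posSemidef.conjTranspose_mul_mul_same J₀
    rw [Matrix.conjTranspose_eq_transpose_of_trivial, hJ₀t] at this
    simpa using this
  have hCC : (-(J₀ * B * J₀)) * (-(J₀ * B * J₀)) = B⁻¹ * B⁻¹ := by
    have e1 : (-(J₀ * B * J₀)) * (-(J₀ * B * J₀)) = -(J₀ * (B * B) * J₀) := by
      calc _ = J₀ * B * (J₀ * J₀) * B * J₀ := by noncomm_ring
        _ = _ := by rw [hJ₀sq]; noncomm_ring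
    have e2 : -(J₀ * (B * B) * J₀) * (B * B) = 1 := by
      calc _ = -((J₀ * (B * B)) * (J₀ * (B * B))) := by noncomm_ring
        _ = 1 := by rw [← hJ, hJsq, neg_neg]
    rw [e1]
    calc _ = -(J₀ * (B * B) * J₀) * (B * (B * B⁻¹) * B⁻¹) := by rw [hBi, mul_one, hBi, mul_one]
      _ = (-(J₀ * (B * B) * J₀) * (B * B)) * (B⁻¹ * B⁻¹) := by simp only [mul_assoc]
      _ = _ := by rw [e2, one_mul]
  have key := sqrt_uniq_aux _ _ hC hBpos.inv.posSemidef hCC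
  have k2 : -(J₀ * B * J₀) * B = 1 := by rw [key, hiB]
  calc B * J * B⁻¹ = B * J₀ * B * (B * B⁻¹) := by rw [hJ]; simp only [mul_assoc]
    _ = B * J₀ * B := by rw [hBi, mul_one]
    _ = -((J₀ * J₀) * (B * J₀ * B)) := by rw [hJ₀sq]; simp
    _ = J₀ * (-(J₀ * B * J₀) * B) := by noncomm_ring
    _ = J₀ := by rw [k2, mul_one]
end
end
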